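/- arXiv:2111.08199 — 2 statements merged into one kernel-verified Lean document; each statement's English description precedes it below -/
import Mathlib

section
/- The set 𝒢 of all compact geodesic metric spaces is path-connected as a subspace of the Gromov–Hausdorff space, and every nonempty open subset of 𝒢 (in the subspace topology) has infinite covering dimension. -/
open GromovHausdorff

/-- A topological space has covering dimension at most `n` if every open cover
admits an open refinement that still covers the space and in which every point
lies in at most `n + 1` members of the refinement. -/
def CovDimLE (X : Type*) [TopologicalSpace X] (n : ℕ) : Prop :=
  ∀ U : Set (Set X), (∀ u ∈ U, IsOpen u) → ⋃₀ U = Set.univ →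
    ∃ V : Set (Set X), (∀ w ∈ V, IsOpen w) ∧ ⋃₀ V = Set.univ ∧
      (∀ w ∈ V, ∃ u ∈ U, w ⊆ u) ∧
      ∀ x : X, {w ∈ V | x ∈ w}.encard ≤ (n : ℕ∞) + 1

/-- A metric space is *geodesic* if any two points `x, y` are joined by a
geodesic, i.e. a map `γ : [0,1] → X` with `γ 0 = x`, `γ 1 = y` and
`dist (γ s) (γ t) = |s - t| * dist x y`. -/
def IsGeodesicSpace (X : Type*) [MetricSpace X] : Prop :=
  ∀ x y : X, ∃ γ : ℝ → X, γ 0 = x ∧ γ 1 = y ∧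
    ∀ s ∈ Set.Icc (0 : ℝ) 1, ∀ t ∈ Set.Icc (0 : ℝ) 1,
      dist (γ s) (γ t) = |s - t| * dist x y

/-- The subset `𝒢` of the Gromov–Hausdorff space consisting of (isometry
classes of) compact geodesic metric spaces. -/
def GHGeodesic : Set GHSpace := {p | IsGeodesicSpace p.Rep}


namespace Sperner

/-- Door counting identity, as an expansion of a determinant mod 2. -/
lemma det_door {k : ℕ} (f : Fin (k+1) → Fin (k+1)) :
    (Matrix.of fun i l => if f i = l then (1 : ZMod 2) else 0).det =
      ∑ i : Fin (k+1), (Matrix.of fun (a l : Fin k) =>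
        if f (i.succAbove a) = l.succ then (1 : ZMod 2) else 0).det := by
  have h := Matrix.det_updateCol_sum
    (Matrix.of fun i l => if f i = l then (1 : ZMod 2) else 0) 0 (fun _ => 1)
  rw [one_smul] at h
  rw [← h, Matrix.det_succ_column_zero]
  refine Finset.sum_congr rfl fun i _ => ?_
  have h1 : ((-1 : ZMod 2)) = 1 := by decide
  rw [h1, one_pow, one_mul]
  simp only [Matrix.updateCol_self, one_smul, Matrix.of_apply, Finset.sum_ite_eq,
    Finset.mem_univ, if_true, one_mul]
  congr 1

/-- Vertices of a simplex of Kuhn's triangulation. -/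
def vert {N : ℕ} (x : Fin N → ℕ) (π : Equiv.Perm (Fin N)) (i : Fin (N+1)) : Fin N → ℕ :=
  fun d => x d + if (i : ℕ) ≤ (π d : ℕ) then 1 else 0

lemma vert_eq {N : ℕ} (x : Fin N → ℕ) (π : Equiv.Perm (Fin N)) (i : Fin (N+1)) (d : Fin N) :
    ((i : ℕ) ≤ (π d : ℕ) ∧ vert x π i d = x d + 1) ∨ ((π d : ℕ) < (i : ℕ) ∧ vert x π i d = x d) := by
  unfold vert
  split_ifs with h
  · exact Or.inl ⟨h, rfl⟩
  · exact Or.inr ⟨not_le.mp h, rfl⟩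

/-- Contribution of a facet. -/
def door {N : ℕ} (lam : (Fin (N+1) → ℕ) → Fin (N+2)) (i : Fin (N+2)) (x : Fin (N+1) → ℕ)
    (π : Equiv.Perm (Fin (N+1))) : ZMod 2 :=
  (Matrix.of fun (a l : Fin (N+1)) =>
    if lam (vert x π (i.succAbove a)) = l.succ then (1 : ZMod 2) else 0).det

lemma add_self_zmod (a : ZMod 2) : a + a = 0 := CharTwo.add_self_eq_zero a

lemma door_inner {N : ℕ} (lam : (Fin (N+1) → ℕ) → Fin (N+2)) (k : Fin N)
    (x : Fin (N+1) → ℕ) :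
    ∑ π : Equiv.Perm (Fin (N+1)), door lam k.succ.castSucc x π = 0 := by
  refine Finset.sum_involution (fun π _ => Equiv.swap k.castSucc k.succ * π) ?_ ?_ ?_ ?_
  · intro π _
    have : door lam k.succ.castSucc x (Equiv.swap k.castSucc k.succ * π) =
        door lam k.succ.castSucc x π := by
      unfold door
      congr 1
      ext a l
      simp only [Matrix.of_apply]
      congr 3
      funext d
      have hv1 := vert_eq x (Equiv.swap k.castSucc k.succ * π) (k.succ.castSucc.succAbove a) d
      have hv2 := vert_eq x π (k.succ.castSucc.succAbove a) d
      rw [Equiv.Perm.mul_apply] at hv1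
      have hne : ((k.succ.castSucc).succAbove a : ℕ) ≠ k + 1 := by
        have := Fin.succAbove_ne (k.succ.castSucc) a
        intro h; apply this; ext; simpa using h
      rcases eq_or_ne (π d) k.castSucc with h | h
      · have e1 : (Equiv.swap k.castSucc k.succ (π d) : ℕ) = k + 1 := by
          rw [h, Equiv.swap_apply_left]; simp
        have e2 : (π d : ℕ) = k := by rw [h]; simp
        omega
      · rcases eq_or_ne (π d) k.succ with h' | h'
        · have e1 : (Equiv.swap k.castSucc k.succ (π d) : ℕ) = k := by
            rw [h', Equiv.swap_apply_right]; simp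
          have e2 : (π d : ℕ) = k + 1 := by rw [h']; simp
          omega
        · have e1 : (Equiv.swap k.castSucc k.succ (π d) : ℕ) = π d := by
            rw [Equiv.swap_apply_of_ne_of_ne h h']
          omega
    rw [this]; exact add_self_zmod _
  · intro π _ _ h
    have h2 : Equiv.swap k.castSucc k.succ = 1 := mul_eq_right.mp h
    rw [Equiv.Perm.one_def, Equiv.swap_eq_refl_iff] at h2
    have := congrArg Fin.val h2
    simp at this
  · intros; exact Finset.mem_univ _
  · intro π _; simp [← mul_assoc]

lemma door_last {N : ℕ} (lam : (Fin (N+1) → ℕ) → Fin (N+2))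
    (x : Fin (N+1) → ℕ) (π : Equiv.Perm (Fin (N+1))) :
    door lam (Fin.last _) x π =
      door lam 0 (x + Pi.single ((finRotate (N+1) * π).symm 0) 1) (finRotate (N+1) * π) := by
  unfold door
  congr 1
  ext a l
  simp only [Matrix.of_apply]
  congr 3
  funext d
  have hv1 := vert_eq x π ((Fin.last _).succAbove a) d
  have hv2 := vert_eq (x + Pi.single ((finRotate (N+1) * π).symm 0) 1) (finRotate (N+1) * π)
    ((0 : Fin (N+2)).succAbove a) d
  rw [Equiv.Perm.mul_apply, Pi.add_apply, Fin.succAbove_zero, Fin.val_succ] at hv2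
  rw [Fin.succAbove_last, Fin.val_castSucc] at hv1
  rw [Fin.succAbove_zero, Fin.succAbove_last]
  have ha := a.isLt
  rcases eq_or_ne (π d) (Fin.last N) with h | h
  · have : (finRotate (N+1) * π).symm 0 = d := by
      rw [Equiv.symm_apply_eq]; simp [h]
    have e1 : (π d : ℕ) = N := by rw [h]; simp
    have e2 : (finRotate (N+1) (π d) : ℕ) = 0 := by rw [h, finRotate_last]; simp
    rw [this, Pi.single_eq_same] at hv2
    rw [this]
    omega
  · have h3 : (finRotate (N+1) * π).symm 0 ≠ d := by
      intro h4
      rw [Equiv.symm_apply_eq] at h4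
      apply h
      have : finRotate (N+1) (Fin.last N) = finRotate (N+1) (π d) := by
        rw [finRotate_last]; exact h4
      exact ((finRotate (N+1)).injective this).symm
    have e2 := coe_finRotate_of_ne_last h
    rw [Pi.single_eq_of_ne' h3] at hv2
    omega

lemma door_zero_vanish {N : ℕ} (lam : (Fin (N+1) → ℕ) → Fin (N+2))
    (x : Fin (N+1) → ℕ) (π : Equiv.Perm (Fin (N+1))) (l : Fin (N+1)) (t : ℕ)
    (hx : x (π.symm 0) = t) (hl : ∀ z, z (π.symm 0) = t → lam z ≠ l.succ) :
    door lam 0 x π = 0 := by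
  unfold door
  apply Matrix.det_eq_zero_of_column_eq_zero l
  intro a
  simp only [Matrix.of_apply]
  rw [if_neg]
  apply hl
  simp [vert, hx]

lemma telescope {N : ℕ} (m : ℕ) (j : Fin (N+1)) (G : (Fin (N+1) → ℕ) → ZMod 2) :
    ∑ x ∈ Fintype.piFinset (fun _ : Fin (N+1) => Finset.range m),
      (G x + G (x + Pi.single j 1)) =
    ∑ y ∈ Fintype.piFinset (fun _ : Fin N => Finset.range m),
      (G (j.insertNth m y) + G (j.insertNth 0 y)) := by
  have h1 : ∑ x ∈ Fintype.piFinset (fun _ : Fin (N+1) => Finset.range m),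
      (G x + G (x + Pi.single j 1)) =
      ∑ q ∈ (Finset.range m) ×ˢ Fintype.piFinset (fun _ : Fin N => Finset.range m),
        (G (j.insertNth q.1 q.2) + G (j.insertNth q.1 q.2 + Pi.single j 1)) := by
    symm
    refine Finset.sum_bij' (fun q _ => (j.insertNth q.1 q.2 : Fin (N+1) → ℕ))
      (fun x _ => (x j, fun i => x (j.succAbove i))) ?_ ?_ ?_ ?_ ?_
    · intro q hq
      rw [Finset.mem_product, Fintype.mem_piFinset] at hq
      rw [Fintype.mem_piFinset, Fin.forall_iff_succAbove j]
      simpa using hq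
    · intro x hx
      rw [Fintype.mem_piFinset] at hx
      rw [Finset.mem_product, Fintype.mem_piFinset]
      exact ⟨hx j, fun i => hx _⟩
    · intro q hq; simp
    · intro x hx; exact Fin.insertNth_self_removeNth j x
    · intro q hq; rfl
  rw [h1, Finset.sum_product_right]
  refine Finset.sum_congr rfl fun y _ => ?_
  have h2 : ∀ t : ℕ, (j.insertNth t y + Pi.single j 1 : Fin (N+1) → ℕ) = j.insertNth (t+1) y := by
    intro t
    funext d
    rcases Fin.eq_self_or_eq_succAbove j d with h | ⟨i, h⟩
    · subst h; simp
    · subst h; simp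
  simp only [h2]
  have h3 := Finset.sum_range_sub (fun t => G (j.insertNth t y)) m
  simp only [CharTwo.sub_eq_add] at h3
  rw [← h3]
  exact Finset.sum_congr rfl fun t _ => add_comm _ _

lemma sum_doors {N : ℕ} (lam : (Fin (N+1) → ℕ) → Fin (N+2)) (x : Fin (N+1) → ℕ) :
    ∑ π : Equiv.Perm (Fin (N+1)),
        (Matrix.of fun i l => if lam (vert x π i) = l then (1 : ZMod 2) else 0).det =
        ∑ π : Equiv.Perm (Fin (N+1)),
          (door lam 0 x π + door lam 0 (x + Pi.single (π.symm 0) 1) π) := by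
  have : ∀ π : Equiv.Perm (Fin (N+1)),
      (Matrix.of fun i l => if lam (vert x π i) = l then (1 : ZMod 2) else 0).det =
        door lam 0 x π + (∑ k : Fin N, door lam k.succ.castSucc x π) +
          door lam (Fin.last _) x π := by
    intro π
    rw [det_door (fun i => lam (vert x π i))]
    change ∑ i, door lam i x π = _
    rw [Fin.sum_univ_castSucc, Fin.sum_univ_succ, Fin.castSucc_zero]
  rw [Finset.sum_congr rfl fun π _ => this π]
  rw [Finset.sum_add_distrib, Finset.sum_add_distrib, Finset.sum_comm,
    Finset.sum_eq_zero (fun k _ => door_inner lam k x), add_zero, Finset.sum_add_distrib]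
  congr 1
  rw [Finset.sum_congr rfl fun π _ => door_last lam x π]
  have h := Equiv.sum_comp (Equiv.mulLeft (finRotate (N+1)))
    (fun π : Equiv.Perm (Fin (N+1)) => door lam 0 (x + Pi.single (π.symm 0) 1) π)
  simp only [Equiv.coe_mulLeft] at h
  exact h

/-- Cubical Sperner (Kuhn). -/
theorem kuhn (m : ℕ) : ∀ (N : ℕ) (lam : (Fin N → ℕ) → Fin (N+1)),
    (∀ x j, x j = 0 → lam x ≠ j.succ) → (∀ x j, x j = m → lam x ≠ j.castSucc) →
    ∑ x ∈ Fintype.piFinset (fun _ : Fin N => Finset.range m), ∑ π : Equiv.Perm (Fin N),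
      (Matrix.of fun i l => if lam (vert x π i) = l then (1 : ZMod 2) else 0).det = 1 := by
  intro N
  induction N with
  | zero =>
    intro lam _ _
    have h : ∀ z, lam z = 0 := fun z => Fin.ext (by omega)
    simp [h]
  | succ N ih =>
    intro lam hA hB
    rw [Finset.sum_congr rfl fun x _ => sum_doors lam x, Finset.sum_comm,
      Finset.sum_congr rfl fun π _ => telescope m (π.symm 0) (fun x => door lam 0 x π)]
    have h0 : ∀ z, z 0 = m → lam z ≠ 0 := fun z hz => hB z 0 hz
    set lam' : (Fin N → ℕ) → Fin (N+1) :=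
      fun z => (lam (Fin.cons m z)).pred (h0 _ rfl) with hlam'
    rw [← ih lam' ?_ ?_]
    · rw [← Equiv.sum_comp (Equiv.Perm.decomposeFin.symm), Fintype.sum_prod_type,
        Finset.sum_eq_single (0 : Fin (N+1)), Finset.sum_comm]
      · refine Finset.sum_congr rfl fun y _ => Finset.sum_congr rfl fun e _ => ?_
        have hs : (Equiv.Perm.decomposeFin.symm ((0 : Fin (N+1)), e)).symm 0 = 0 := by
          rw [Equiv.symm_apply_eq]; simp
        rw [hs]
        rw [door_zero_vanish lam (Fin.insertNth 0 0 y) _ 0 0 (by rw [hs]; simp)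
          (by rw [hs]; intro z hz; exact hA z 0 hz), add_zero]
        unfold door
        congr 1
        ext a l
        simp only [Matrix.of_apply]
        have hv : vert (Fin.insertNth 0 m y : Fin (N+1) → ℕ)
            (Equiv.Perm.decomposeFin.symm ((0 : Fin (N+1)), e)) ((0 : Fin (N+2)).succAbove a)
            = Fin.cons m (vert y e a) := by
          funext d
          refine Fin.cases ?_ (fun d => ?_) d
          · simp [vert]
          · simp [vert]
        rw [hv]
        congr 1
        rw [eq_iff_iff, hlam', Fin.pred_eq_iff_eq_succ]
      · intro p _ hp
        refine Finset.sum_eq_zero fun e _ => Finset.sum_eq_zero fun y _ => ?_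
        set π := Equiv.Perm.decomposeFin.symm (p, e) with hπ
        have hj : π.symm 0 ≠ 0 := by
          intro h
          rw [Equiv.symm_apply_eq] at h
          simp [hπ] at h
          exact hp h.symm
        obtain ⟨l, hl⟩ := Fin.exists_succ_eq.mpr hj
        rw [door_zero_vanish lam _ π (π.symm 0) 0 (Fin.insertNth_apply_same _ _ _) (fun z hz => hA z _ hz),
          door_zero_vanish lam _ π l.castSucc m (Fin.insertNth_apply_same _ _ _), add_zero]
        intro z hz
        have := hB z _ hz
        rwa [← hl, ← Fin.succ_castSucc] at this
      · intro h; exact absurd (Finset.mem_univ _) h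
    · intro z j hz h
      rw [hlam', Fin.pred_eq_iff_eq_succ] at h
      exact hA (Fin.cons m z) j.succ (by simpa using hz) h
    · intro z j hz h
      rw [hlam', Fin.pred_eq_iff_eq_succ] at h
      exact hB (Fin.cons m z) j.succ (by simpa using hz) (by rw [h, Fin.succ_castSucc])

theorem kuhn_exists (m N : ℕ) (lam : (Fin N → ℕ) → Fin (N+1))
    (hA : ∀ x j, x j = 0 → lam x ≠ j.succ) (hB : ∀ x j, x j = m → lam x ≠ j.castSucc) :
    ∃ (x : Fin N → ℕ), (∀ d, x d < m) ∧ ∀ l : Fin (N+1), ∃ z : Fin N → ℕ, lam z = l ∧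
      ∀ d, x d ≤ z d ∧ z d ≤ x d + 1 := by
  have h := kuhn m N lam hA hB
  obtain ⟨x, hx, h1⟩ := Finset.exists_ne_zero_of_sum_ne_zero (by rw [h]; exact one_ne_zero)
  obtain ⟨π, _, h2⟩ := Finset.exists_ne_zero_of_sum_ne_zero h1
  refine ⟨x, fun d => Finset.mem_range.mp (Fintype.mem_piFinset.mp hx d), fun l => ?_⟩
  by_contra hc
  push Not at hc
  apply h2
  apply Matrix.det_eq_zero_of_column_eq_zero l
  intro i
  simp only [Matrix.of_apply]
  rw [if_neg]
  intro hl
  obtain ⟨d, hd⟩ := hc _ hl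
  have := vert_eq x π i d
  omega

end Sperner

/-- Lebesgue covering theorem, in the form we need. -/
theorem not_covDimLE {Y : Type*} [TopologicalSpace Y] [T2Space Y] (n : ℕ)
    (f : (Fin (n+1) → unitInterval) → Y) (hf : Continuous f)
    (hd : ∀ j a b, a j = 0 → b j = 1 → f a ≠ f b) : ¬ CovDimLE Y n := by
  classical
  intro H
  -- faces
  let A : Fin (n+1) → Set Y := fun j => f '' {a | a j = 0}
  let B : Fin (n+1) → Set Y := fun j => f '' {a | a j = 1}
  have hA : ∀ j, IsClosed (A j) := fun j =>
    ((isClosed_eq (continuous_apply j) continuous_const).isCompact.image hf).isClosed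
  have hB : ∀ j, IsClosed (B j) := fun j =>
    ((isClosed_eq (continuous_apply j) continuous_const).isCompact.image hf).isClosed
  let O : Set (Fin (n+1)) → Set Y := fun s => ⋂ j, (if j ∈ s then (A j)ᶜ else (B j)ᶜ)
  obtain ⟨V, hVo, hVc, hVr, hVn⟩ := H (Set.range O) (by
      rintro _ ⟨s, rfl⟩
      refine isOpen_iInter_of_finite fun j => ?_
      split_ifs
      · exact (hA j).isOpen_compl
      · exact (hB j).isOpen_compl) (by
      rw [Set.eq_univ_iff_forall]
      intro y
      refine ⟨_, ⟨{j | y ∉ A j}, rfl⟩, ?_⟩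
      rw [Set.mem_iInter]
      intro j
      split_ifs with h
      · exact h
      · have h' : y ∈ A j := by simpa using h
        obtain ⟨a, ha, rfl⟩ := h'
        rintro ⟨b, hb, hab⟩
        exact hd j a b ha hb hab.symm)
  have hVd : ∀ w ∈ V, ∀ j, (∃ a, a j = 0 ∧ f a ∈ w) → ¬ (∃ b, b j = 1 ∧ f b ∈ w) := by
    rintro w hw j ⟨a, ha, haw⟩ ⟨b, hb, hbw⟩
    obtain ⟨_, ⟨s, rfl⟩, hs⟩ := hVr w hw
    have h1 := Set.mem_iInter.mp (hs haw) j
    have h2 := Set.mem_iInter.mp (hs hbw) j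
    split_ifs at h1 h2
    · exact h1 ⟨a, ha, rfl⟩
    · exact h2 ⟨b, hb, rfl⟩
  -- Lebesgue number
  obtain ⟨δ, hδ, hleb⟩ := lebesgue_number_lemma_of_metric_sUnion
    (s := (Set.univ : Set (Fin (n+1) → unitInterval))) (c := (fun w => f ⁻¹' w) '' V)
    isCompact_univ (by rintro _ ⟨w, hw, rfl⟩; exact (hVo w hw).preimage hf) (by
      intro a _
      have : f a ∈ ⋃₀ V := by rw [hVc]; trivial
      obtain ⟨w, hw, haw⟩ := this
      exact ⟨_, ⟨w, hw, rfl⟩, haw⟩)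
  have hleb' : ∀ a, ∃ w ∈ V, Metric.ball a δ ⊆ f ⁻¹' w := by
    intro a
    obtain ⟨_, ⟨w, hw, rfl⟩, h⟩ := hleb a trivial
    exact ⟨w, hw, h⟩
  choose W hWV hWb using hleb'
  -- colours
  have hcol : ∀ w ∈ V, ∃ c : Fin (n+2), (∀ j : Fin (n+1), (∃ a, a j = 0 ∧ f a ∈ w) → c ≠ j.succ) ∧
      (∀ j : Fin (n+1), (∃ b, b j = 1 ∧ f b ∈ w) → c ≠ j.castSucc) := by
    intro w hw
    by_cases hc : ∃ i : ℕ, ∃ h : i < n+1, ¬ ∃ b, b ⟨i, h⟩ = 1 ∧ f b ∈ w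
    · have hs := Nat.find_spec hc
      set i := Nat.find hc with hi
      obtain ⟨hlt, hno⟩ := hs
      refine ⟨⟨i, by omega⟩, fun j hj h => ?_, fun j hj h => ?_⟩
      · have h1 : i = j + 1 := by simpa using congrArg Fin.val h
        have : (j : ℕ) < i := by omega
        exact Nat.find_min hc this ⟨j.isLt, hVd w hw j hj⟩
      · have h1 : i = j := by simpa using congrArg Fin.val h
        apply hno
        have : (⟨i, hlt⟩ : Fin (n+1)) = j := Fin.ext h1
        rw [this]; exact hj
    · push Not at hc
      refine ⟨Fin.last _, fun j hj _ => ?_, fun j _ h => ?_⟩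
      · exact hVd w hw j hj (hc j j.isLt)
      · have := congrArg Fin.val h
        simp at this
        omega
  choose! c hcA hcB using hcol
  obtain ⟨m, hm⟩ := exists_nat_gt (1 / δ)
  have hm0 : (0 : ℝ) < m := lt_trans (by positivity) hm
  let pt : (Fin (n+1) → ℕ) → (Fin (n+1) → unitInterval) :=
    fun x d => Set.projIcc (0:ℝ) 1 zero_le_one ((x d : ℝ) / m)
  have hself : ∀ a, f a ∈ W a := fun a => hWb a (Metric.mem_ball_self hδ)
  obtain ⟨x, _, hx⟩ := Sperner.kuhn_exists m (n+1) (fun z => c (W (pt z)))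
    (by
      intro z j hz
      refine hcA _ (hWV _) j ⟨pt z, ?_, hself _⟩
      simp [pt, hz])
    (by
      intro z j hz
      refine hcB _ (hWV _) j ⟨pt z, ?_, hself _⟩
      simp only [pt, hz]
      rw [div_self hm0.ne']
      exact Set.projIcc_right (zero_le_one (α := ℝ)))
  choose z hz hzx using hx
  have hin : ∀ l, f (pt x) ∈ W (pt (z l)) := by
    intro l
    apply hWb
    rw [Metric.mem_ball, dist_pi_lt_iff hδ]
    intro d
    obtain ⟨h1, h2⟩ := hzx l d
    have h3 : dist (pt x d) (pt (z l) d) ≤ |(x d : ℝ) / m - (z l d : ℝ) / m| :=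
      Set.abs_projIcc_sub_projIcc zero_le_one
    refine lt_of_le_of_lt h3 ?_
    rw [← sub_div, abs_div, abs_of_pos hm0, div_lt_iff₀ hm0]
    have h1' : (x d : ℝ) ≤ z l d := by exact_mod_cast h1
    have h2' : (z l d : ℝ) ≤ x d + 1 := by exact_mod_cast h2
    have : |(x d : ℝ) - z l d| ≤ 1 := by rw [abs_le]; constructor <;> linarith
    rw [div_lt_iff₀ hδ] at hm
    nlinarith
  have hinj : Function.Injective (fun l => W (pt (z l))) := by
    intro l l' h
    have := congrArg c h
    simp only [hz] at this
    exact this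
  have hcard := hVn (f (pt x))
  have hsub : Set.range (fun l => W (pt (z l))) ⊆ {w ∈ V | f (pt x) ∈ w} := by
    rintro _ ⟨l, rfl⟩
    exact ⟨hWV _, hin l⟩
  have h1 := (Set.encard_le_encard hsub).trans hcard
  rw [← Set.image_univ, hinj.encard_image, Set.encard_univ] at h1
  simp only [ENat.card_eq_coe_fintype_card, Fintype.card_fin] at h1
  norm_cast at h1
  omega

/-! ### Geodesics -/

/-- Two points joined by a geodesic. -/
def Gd {X : Type*} [MetricSpace X] (x y : X) : Prop :=
  ∃ γ : ℝ → X, γ 0 = x ∧ γ 1 = y ∧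
    ∀ s ∈ Set.Icc (0 : ℝ) 1, ∀ t ∈ Set.Icc (0 : ℝ) 1,
      dist (γ s) (γ t) = |s - t| * dist x y

section Geo
variable {X Y : Type*} [MetricSpace X] [MetricSpace Y]

lemma Gd.of_le {x y : X} (γ : ℝ → X) (h0 : γ 0 = x) (h1 : γ 1 = y)
    (h : ∀ s t, 0 ≤ s → s ≤ t → t ≤ 1 → dist (γ s) (γ t) ≤ (t - s) * dist x y) : Gd x y := by
  have key : ∀ s t, 0 ≤ s → s ≤ t → t ≤ 1 → dist (γ s) (γ t) = (t - s) * dist x y := by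
    intro s t hs hst ht
    refine le_antisymm (h s t hs hst ht) ?_
    have a1 := h 0 s le_rfl hs (hst.trans ht)
    have a2 := h t 1 (hs.trans hst) ht le_rfl
    have a3 := dist_triangle4 (γ 0) (γ s) (γ t) (γ 1)
    rw [h0] at a1 a3
    rw [h1] at a2 a3
    nlinarith
  refine ⟨γ, h0, h1, fun s hs t ht => ?_⟩
  rcases le_total s t with hst | hst
  · rw [key s t hs.1 hst ht.2, abs_sub_comm, abs_of_nonneg (by linarith)]
  · rw [dist_comm, key t s ht.1 hst hs.2, abs_of_nonneg (by linarith)]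

lemma Gd.symm {x y : X} (h : Gd x y) : Gd y x := by
  obtain ⟨γ, h0, h1, h⟩ := h
  refine ⟨fun t => γ (1 - t), by simpa using h1, by simpa using h0, fun s hs t ht => ?_⟩
  rw [h (1 - s) ⟨by linarith [hs.2], by linarith [hs.1]⟩ (1 - t)
    ⟨by linarith [ht.2], by linarith [ht.1]⟩, dist_comm y x, abs_sub_comm]
  congr 2
  ring

lemma Gd.map {x y : X} (h : Gd x y) {φ : X → Y} (hφ : Isometry φ) : Gd (φ x) (φ y) := by
  obtain ⟨γ, h0, h1, h⟩ := h
  refine ⟨fun t => φ (γ t), congrArg φ h0, congrArg φ h1, fun s hs t ht => ?_⟩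
  rw [hφ.dist_eq, hφ.dist_eq, h s hs t ht]

lemma Gd.rfl' (x : X) : Gd x x := ⟨fun _ => x, rfl, rfl, by simp⟩

lemma Gd.trans {x p y : X} (h1 : Gd x p) (h2 : Gd p y) (hd : dist x y = dist x p + dist p y) :
    Gd x y := by
  rcases eq_or_ne x p with rfl | hxp
  · exact h2
  rcases eq_or_ne p y with rfl | hpy
  · exact h1
  have ha : 0 < dist x p := dist_pos.mpr hxp
  have hb : 0 < dist p y := dist_pos.mpr hpy
  obtain ⟨γ, g0, g1, g⟩ := h1
  obtain ⟨σ, s0, s1, hs⟩ := h2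
  set a := dist x p
  set b := dist p y
  set c := dist x y
  let G : ℝ → X := fun t => if t * c ≤ a then γ (t * c / a) else σ ((t * c - a) / b)
  have hG1 : ∀ t, t * c ≤ a → G t = γ (t * c / a) := fun t ht => if_pos ht
  have hG2 : ∀ t, a ≤ t * c → G t = σ ((t * c - a) / b) := by
    intro t ht
    rcases eq_or_lt_of_le ht with h | h
    · rw [hG1 t h.ge, ← h, div_self ha.ne', sub_self, zero_div, g1, s0]
    · exact if_neg (not_le.mpr h)
  have hc : 0 < c := by linarith
  have L1 : ∀ s t, 0 ≤ s → s ≤ t → t * c ≤ a → dist (G s) (G t) ≤ (t - s) * c := by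
    intro s t h0 hst hta
    have hsc : s * c ≤ t * c := by nlinarith
    rw [hG1 s (hsc.trans hta), hG1 t hta, g]
    · rw [← sub_div, abs_div, abs_of_pos ha, div_mul_cancel₀ _ ha.ne', abs_sub_comm,
        abs_of_nonneg (by linarith)]
      linarith
    · exact ⟨by positivity, by rw [div_le_one ha]; linarith⟩
    · exact ⟨by have := h0.trans hst; positivity, by rw [div_le_one ha]; linarith⟩
  have L2 : ∀ s t, s ≤ t → t ≤ 1 → a ≤ s * c → dist (G s) (G t) ≤ (t - s) * c := by
    intro s t hst ht1 has
    have hsc : s * c ≤ t * c := by nlinarith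
    have htc : t * c ≤ c := by nlinarith
    rw [hG2 s has, hG2 t (has.trans hsc), hs]
    · rw [← sub_div, abs_div, abs_of_pos hb, div_mul_cancel₀ _ hb.ne', abs_sub_comm,
        abs_of_nonneg (by linarith)]
      linarith
    · exact ⟨div_nonneg (by linarith) hb.le, by rw [div_le_one hb]; linarith⟩
    · exact ⟨div_nonneg (by linarith) hb.le, by rw [div_le_one hb]; linarith⟩
  refine Gd.of_le G ?_ ?_ ?_
  · rw [hG1 0 (by simpa using ha.le)]; simp [g0]
  · rw [hG2 1 (by linarith), one_mul, hd, add_sub_cancel_left, div_self hb.ne', s1]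
  · intro s t h0 hst ht1
    rcases le_total (t * c) a with h | h
    · exact L1 s t h0 hst h
    rcases le_total a (s * c) with h' | h'
    · exact L2 s t hst ht1 h'
    · have e : a / c * c = a := div_mul_cancel₀ _ hc.ne'
      have h3 : s ≤ a / c := by rw [le_div_iff₀ hc]; exact h'
      have h4 : a / c ≤ t := by rw [div_le_iff₀ hc]; exact h
      have h5 := L1 s (a / c) h0 h3 e.le
      have h6 := L2 (a / c) t h4 ht1 e.ge
      have := dist_triangle (G s) (G (a / c)) (G t)
      nlinarith

lemma IsGeodesicSpace.of_equiv (h : IsGeodesicSpace X) (e : X ≃ᵢ Y) : IsGeodesicSpace Y := by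
  intro x y
  have := Gd.map (h (e.symm x) (e.symm y)) e.isometry
  rw [e.apply_symm_apply, e.apply_symm_apply] at this
  exact this

lemma IsGeodesicSpace.prod (hX : IsGeodesicSpace X) (hY : IsGeodesicSpace Y) :
    IsGeodesicSpace (X × Y) := by
  rintro ⟨x, y⟩ ⟨x', y'⟩
  obtain ⟨γ, g0, g1, g⟩ := hX x x'
  obtain ⟨σ, s0, s1, s⟩ := hY y y'
  refine ⟨fun t => (γ t, σ t), by simp [g0, s0], by simp [g1, s1], fun a ha b hb => ?_⟩
  rw [Prod.dist_eq, Prod.dist_eq, g a ha b hb, s a ha b hb, mul_max_of_nonneg _ _ (abs_nonneg _)]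

lemma isGeodesicSpace_Icc (a b : ℝ) : IsGeodesicSpace (Set.Icc a b) := by
  rintro ⟨x, hx⟩ ⟨y, hy⟩
  have hm : ∀ t ∈ Set.Icc (0:ℝ) 1, x + t * (y - x) ∈ Set.Icc a b := by
    intro t ht
    have := (convex_Icc a b).add_smul_sub_mem hx hy ht
    simpa using this
  refine ⟨fun t => ⟨x + (Set.projIcc (0:ℝ) 1 zero_le_one t : ℝ) * (y - x), hm _ (Subtype.prop _)⟩,
    by simp, by simp, fun s hs t ht => ?_⟩
  simp only [Set.projIcc_of_mem _ hs, Set.projIcc_of_mem _ ht]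
  rw [Subtype.dist_eq, Subtype.dist_eq,
    Real.dist_eq, Real.dist_eq, ← abs_mul, ← abs_neg]
  congr 1
  simp only
  ring

end Geo

lemma toGHSpace_mem {X : Type*} [MetricSpace X] [CompactSpace X] [Nonempty X]
    (h : IsGeodesicSpace X) : toGHSpace X ∈ GHGeodesic := by
  have : toGHSpace (toGHSpace X).Rep = toGHSpace X := GHSpace.toGHSpace_rep _
  obtain ⟨e⟩ := toGHSpace_eq_toGHSpace_iff_isometryEquiv.mp this
  exact h.of_equiv e.symm

/-! ### Path connectedness by rescaling -/

open TopologicalSpace in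
/-- Rescaled copy of a compact set. -/
def scaled (K : NonemptyCompacts (lp (fun _ : ℕ => ℝ) ⊤)) (t : ℝ) : NonemptyCompacts (lp (fun _ : ℕ => ℝ) ⊤) :=
  ⟨⟨(fun z => t • z) '' (K : Set (lp (fun _ : ℕ => ℝ) ⊤)), K.isCompact.image (continuous_const_smul t)⟩,
    K.nonempty.image _⟩

open TopologicalSpace in
lemma scaled_geodesic (K : NonemptyCompacts (lp (fun _ : ℕ => ℝ) ⊤)) (hK : IsGeodesicSpace K) (t : ℝ) :
    IsGeodesicSpace (scaled K t) := by
  rintro ⟨_, x, hx, rfl⟩ ⟨_, y, hy, rfl⟩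
  obtain ⟨γ, g0, g1, g⟩ := hK ⟨x, hx⟩ ⟨y, hy⟩
  refine ⟨fun s => ⟨t • (γ s : (lp (fun _ : ℕ => ℝ) ⊤)), ⟨_, (γ s).2, rfl⟩⟩, ?_, ?_, fun a ha b hb => ?_⟩
  · simp [g0]
  · simp [g1]
  · have := g a ha b hb
    rw [Subtype.dist_eq] at this ⊢
    rw [Subtype.dist_eq] at this ⊢
    simp only [dist_smul₀] at this ⊢
    rw [this]; ring

open TopologicalSpace in
lemma scaled_continuous (K : NonemptyCompacts (lp (fun _ : ℕ => ℝ) ⊤)) : Continuous (scaled K) := by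
  obtain ⟨R, hR⟩ := K.isCompact.isBounded.exists_norm_le
  have hR0 : 0 ≤ R := by
    obtain ⟨x, hx⟩ := K.nonempty
    exact (norm_nonneg x).trans (hR x hx)
  have hb : ∀ s t : ℝ, ∀ x ∈ (K : Set (lp (fun _ : ℕ => ℝ) ⊤)), dist (s • x) (t • x) ≤ R * dist s t := by
    intro s t x hx
    rw [dist_eq_norm, ← sub_smul, norm_smul, Real.dist_eq, Real.norm_eq_abs, mul_comm]
    exact mul_le_mul_of_nonneg_right (hR x hx) (abs_nonneg _)
  refine (LipschitzWith.of_dist_le_mul (K := ⟨R, hR0⟩) fun s t => ?_).continuous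
  rw [Metric.NonemptyCompacts.dist_eq]
  refine Metric.hausdorffDist_le_of_mem_dist (mul_nonneg hR0 dist_nonneg) ?_ ?_
  · rintro _ ⟨x, hx, rfl⟩
    exact ⟨_, ⟨x, hx, rfl⟩, hb s t x hx⟩
  · rintro _ ⟨x, hx, rfl⟩
    refine ⟨_, ⟨x, hx, rfl⟩, ?_⟩
    rw [dist_comm s t]
    exact hb t s x hx

open TopologicalSpace in
lemma toGHSpace_of_isometry {X Y : Type*} [MetricSpace X] [CompactSpace X] [Nonempty X]
    [MetricSpace Y] (K : NonemptyCompacts Y) (φ : X → Y) (hφ : Isometry φ)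
    (hK : (K : Set Y) = Set.range φ) : K.toGHSpace = toGHSpace X := by
  refine toGHSpace_eq_toGHSpace_iff_isometryEquiv.mpr ⟨?_⟩
  have e := hφ.isometryEquivOnRange
  rw [← hK] at e
  exact e.symm

theorem ghGeodesic_pathConnected : PathConnectedSpace ↥GHGeodesic := by
  have hpt : toGHSpace PUnit.{1} ∈ GHGeodesic := by
    apply toGHSpace_mem
    intro x y
    exact ⟨fun _ => x, rfl, rfl, by simp⟩
  have key : ∀ p : ↥GHGeodesic, Joined (⟨_, hpt⟩ : ↥GHGeodesic) p := by
    rintro ⟨p, hp⟩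
    let K := NonemptyCompacts.kuratowskiEmbedding p.Rep
    have hKr : (K : Set (lp (fun _ : ℕ => ℝ) ⊤)) = Set.range (kuratowskiEmbedding p.Rep) := rfl
    have hK : IsGeodesicSpace K := by
      have e := (kuratowskiEmbedding.isometry p.Rep).isometryEquivOnRange
      exact IsGeodesicSpace.of_equiv hp e
    refine ⟨⟨⟨fun t => ⟨(scaled K t).toGHSpace, toGHSpace_mem (scaled_geodesic K hK t)⟩, ?_⟩,
      ?_, ?_⟩⟩
    · exact (toGHSpace_continuous.comp ((scaled_continuous K).comp continuous_subtype_val)).subtype_mk _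
    · apply Subtype.ext
      refine toGHSpace_of_isometry _ (fun _ : PUnit.{1} => (0 : (lp (fun _ : ℕ => ℝ) ⊤))) (by intro x y; simp) ?_
      obtain ⟨x, hx⟩ := K.nonempty
      ext z
      constructor
      · rintro ⟨y, hy, rfl⟩
        exact ⟨PUnit.unit, by simp⟩
      · rintro ⟨_, rfl⟩
        exact ⟨x, hx, by simp⟩
    · apply Subtype.ext
      refine (toGHSpace_of_isometry _ (kuratowskiEmbedding p.Rep)
        (kuratowskiEmbedding.isometry _) ?_).trans (GHSpace.toGHSpace_rep p)
      rw [← hKr]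
      change (fun z => (1 : ℝ) • z) '' (K : Set (lp (fun _ : ℕ => ℝ) ⊤)) = _
      simp
  exact ⟨⟨⟨_, hpt⟩⟩, fun x y => (key x).symm.trans (key y)⟩

/-! ### The wedge of a space with whiskers -/

section Wedge

variable {C : Type} [MetricSpace C] {N : ℕ}

/-- Ambient space of the wedge. -/
abbrev Amb (C : Type) (N : ℕ) : Type := WithLp 1 (C × PiLp 1 (fun _ : Fin N => ℝ))

/-- Core embedding. -/
def core (N : ℕ) (c : C) : Amb C N := WithLp.toLp 1 (c, 0)

/-- Whiskers. -/
def leg (p : C) (j : Fin N) (t : ℝ) : Amb C N :=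
  WithLp.toLp 1 (p, PiLp.single 1 j t)

lemma amb_dist (x y : Amb C N) : dist x y = dist x.fst y.fst + dist x.snd y.snd := by
  rw [WithLp.prod_dist_eq_add (by simp)]
  simp

lemma core_core (c c' : C) : dist (core N c) (core N c') = dist c c' := by
  rw [amb_dist]; simp [core]

lemma core_leg (p c : C) (j : Fin N) {t : ℝ} (ht : 0 ≤ t) :
    dist (core N c) (leg p j t) = dist c p + t := by
  rw [amb_dist]
  congr 1
  change dist (0 : PiLp 1 (fun _ : Fin N => ℝ)) (PiLp.single 1 j t) = t
  rw [PiLp.dist_eq_of_L1, Finset.sum_eq_single j]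
  · simp [abs_of_nonneg ht]
  · intro i _ hi
    simp [hi]
  · simp

lemma leg_leg (p : C) (j : Fin N) (s t : ℝ) : dist (leg p j s) (leg p j t) = |s - t| := by
  rw [amb_dist]
  change dist p p + dist (PiLp.single 1 j s : PiLp 1 (fun _ : Fin N => ℝ)) (PiLp.single 1 j t) = _
  rw [PiLp.dist_eq_of_L1, Finset.sum_eq_single j]
  · simp [Real.dist_eq]
  · intro i _ hi
    simp [hi]
  · simp

lemma leg_leg_ne (p : C) {i j : Fin N} (hij : i ≠ j) {s t : ℝ} (hs : 0 ≤ s) (ht : 0 ≤ t) :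
    dist (leg p i s) (leg p j t) = s + t := by
  rw [amb_dist]
  change dist p p + dist (PiLp.single 1 i s : PiLp 1 (fun _ : Fin N => ℝ)) (PiLp.single 1 j t) = _
  rw [PiLp.dist_eq_of_L1, Finset.sum_eq_add i j hij]
  · simp [Real.dist_eq, hij, hij.symm, abs_of_nonneg hs, abs_of_nonneg ht]
  · intro k _ hk
    simp [hk.1, hk.2]
  · simp
  · simp

lemma leg_zero (p : C) (j : Fin N) : leg p j 0 = core N p := by
  rw [← dist_eq_zero, dist_comm, core_leg p p j le_rfl]; simp

lemma core_isometry : Isometry (core N : C → Amb C N) :=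
  Isometry.of_dist_eq core_core

lemma leg_isometry (p : C) (j : Fin N) : Isometry (leg p j) :=
  Isometry.of_dist_eq fun s t => by rw [leg_leg, Real.dist_eq]

variable [CompactSpace C]

/-- The wedge. -/
def wedge (p : C) (ell : Fin N → ℝ) : TopologicalSpace.NonemptyCompacts (Amb C N) :=
  ⟨⟨Set.range (core N) ∪ ⋃ j, leg p j '' Set.Icc 0 (ell j),
    (isCompact_range core_isometry.continuous).union
      (isCompact_iUnion fun j => isCompact_Icc.image (leg_isometry p j).continuous)⟩,
    ⟨core N p, Or.inl ⟨p, rfl⟩⟩⟩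

lemma mem_wedge {p : C} {ell : Fin N → ℝ} {z : Amb C N} :
    z ∈ wedge p ell ↔ (∃ c, core N c = z) ∨ ∃ j, ∃ t, (0 ≤ t ∧ t ≤ ell j) ∧ leg p j t = z := by
  change z ∈ Set.range (core N) ∪ ⋃ j, leg p j '' Set.Icc 0 (ell j) ↔ _
  simp

/-- Core point in the wedge. -/
def wcore (p : C) (ell : Fin N → ℝ) (c : C) : wedge p ell :=
  ⟨core N c, mem_wedge.mpr (Or.inl ⟨c, rfl⟩)⟩

/-- Whisker point in the wedge. -/
def wleg (p : C) (ell : Fin N → ℝ) (j : Fin N) (t : Set.Icc 0 (ell j)) : wedge p ell :=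
  ⟨leg p j t, mem_wedge.mpr (Or.inr ⟨j, t, t.2, rfl⟩)⟩

lemma wedge_cases {p : C} {ell : Fin N → ℝ} (z : wedge p ell) :
    (∃ c, z = wcore p ell c) ∨ ∃ j t, z = wleg p ell j t := by
  obtain ⟨z, hz⟩ := z
  rcases mem_wedge.mp hz with ⟨c, rfl⟩ | ⟨j, t, ht, rfl⟩
  · exact Or.inl ⟨c, rfl⟩
  · exact Or.inr ⟨j, ⟨t, ht⟩, rfl⟩

lemma wcc (p : C) (ell : Fin N → ℝ) (c c' : C) :
    dist (wcore p ell c) (wcore p ell c') = dist c c' := core_core c c'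

lemma wcl (p : C) (ell : Fin N → ℝ) (c : C) (j) (t : Set.Icc 0 (ell j)) :
    dist (wcore p ell c) (wleg p ell j t) = dist c p + t := core_leg p c j t.2.1

lemma wlc (p : C) (ell : Fin N → ℝ) (c : C) (j) (t : Set.Icc 0 (ell j)) :
    dist (wleg p ell j t) (wcore p ell c) = dist c p + t := by rw [dist_comm, wcl]

lemma wll (p : C) (ell : Fin N → ℝ) (j) (s t : Set.Icc 0 (ell j)) :
    dist (wleg p ell j s) (wleg p ell j t) = |(s : ℝ) - t| := leg_leg p j s t

lemma wll_ne (p : C) (ell : Fin N → ℝ) {i j} (h : i ≠ j) (s : Set.Icc 0 (ell i))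
    (t : Set.Icc 0 (ell j)) :
    dist (wleg p ell i s) (wleg p ell j t) = s + t := leg_leg_ne p h s.2.1 t.2.1

lemma wedge_geodesic (hC : IsGeodesicSpace C) (p : C) (ell : Fin N → ℝ) :
    IsGeodesicSpace (wedge p ell) := by
  have hcc : ∀ c c', Gd (wcore p ell c) (wcore p ell c') := fun c c' =>
    Gd.map (hC c c') (Isometry.of_dist_eq (wcc p ell))
  have hll : ∀ j s t, Gd (wleg p ell j s) (wleg p ell j t) := fun j s t =>
    Gd.map (isGeodesicSpace_Icc 0 (ell j) s t)
      (Isometry.of_dist_eq fun s t => by rw [wll, Subtype.dist_eq, Real.dist_eq])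
  have hpl : ∀ j t, Gd (wcore p ell p) (wleg p ell j t) := by
    intro j t
    have h0 : (0:ℝ) ∈ Set.Icc 0 (ell j) := ⟨le_rfl, t.2.1.trans t.2.2⟩
    have : wcore p ell p = wleg p ell j ⟨0, h0⟩ := by
      apply Subtype.ext
      exact (leg_zero p j).symm
    rw [this]; exact hll j _ t
  have hcl : ∀ c j t, Gd (wcore p ell c) (wleg p ell j t) := by
    intro c j t
    refine (hcc c p).trans (hpl j t) ?_
    rw [wcl, wcc, wcl, dist_self, zero_add]
  intro x y
  rcases wedge_cases x with ⟨c, rfl⟩ | ⟨i, s, rfl⟩ <;>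
    rcases wedge_cases y with ⟨c', rfl⟩ | ⟨j, t, rfl⟩
  · exact hcc c c'
  · exact hcl c j t
  · exact (hcl c' i s).symm
  · rcases eq_or_ne i j with rfl | hij
    · exact hll i s t
    · refine (hpl i s).symm.trans (hpl j t) ?_
      rw [wll_ne p ell hij, wlc, wcl]; simp

lemma wedge_dist_le (p : C) (ell ell' : Fin N → ℝ) (h0 : ∀ j, 0 ≤ ell j) (h0' : ∀ j, 0 ≤ ell' j)
    (r : ℝ) (hr : 0 ≤ r) (h : ∀ j, |ell j - ell' j| ≤ r) : dist (wedge p ell) (wedge p ell') ≤ r := by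
  have key : ∀ ell ell' : Fin N → ℝ, (∀ j, 0 ≤ ell j) → (∀ j, 0 ≤ ell' j) →
      (∀ j, |ell j - ell' j| ≤ r) → ∀ x ∈ wedge p ell, ∃ y ∈ wedge p ell', dist x y ≤ r := by
    intro ell ell' h0 h0' h x hx
    rcases mem_wedge.mp hx with ⟨c, rfl⟩ | ⟨j, t, ht, rfl⟩
    · exact ⟨core N c, mem_wedge.mpr (Or.inl ⟨c, rfl⟩), by simpa using hr⟩
    · refine ⟨leg p j (min t (ell' j)), mem_wedge.mpr (Or.inr ⟨j, _, ⟨le_min ht.1 (h0' j),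
        min_le_right _ _⟩, rfl⟩), ?_⟩
      rw [leg_leg]
      have := abs_le.mp (h j)
      rcases min_cases t (ell' j) with ⟨h1, h2⟩ | ⟨h1, h2⟩
      · rw [h1]; simpa using hr
      · rw [h1, abs_of_nonneg (by linarith)]; linarith [ht.2]
  rw [Metric.NonemptyCompacts.dist_eq]
  refine Metric.hausdorffDist_le_of_mem_dist hr (key ell ell' h0 h0' h) (key ell' ell h0' h0 ?_)
  intro j
  rw [abs_sub_comm]; exact h j

end Wedge

/-- `q` is an endpoint of an isolated segment of length `r`. -/
def Tip {X : Type*} [MetricSpace X] (q : X) (r : ℝ) : Prop :=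
  ∀ y z, dist q y < r → dist q z < r → dist y z = |dist q y - dist q z|

/-- The space has a whisker of length exactly `L`. -/
def HasLen (X : Type*) [MetricSpace X] (L : ℝ) : Prop :=
  ∃ q : X, Tip q L ∧ ∀ r, L < r → ¬ Tip q r

lemma Tip.map {X Y : Type*} [MetricSpace X] [MetricSpace Y] (e : X ≃ᵢ Y) {q : X} {r : ℝ}
    (h : Tip q r) : Tip (e q) r := by
  intro y z hy hz
  obtain ⟨y, rfl⟩ := e.surjective y
  obtain ⟨z, rfl⟩ := e.surjective z
  simp only [e.dist_eq] at *
  exact h y z hy hz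

lemma HasLen.map {X Y : Type*} [MetricSpace X] [MetricSpace Y] (e : X ≃ᵢ Y) {L : ℝ}
    (h : HasLen X L) : HasLen Y L := by
  obtain ⟨q, h1, h2⟩ := h
  refine ⟨e q, h1.map e, fun r hr h => h2 r hr ?_⟩
  have := h.map e.symm
  simpa using this

/-- Every point of the space sits at the apex of arbitrarily small equilateral triangles. -/
def Fork (C : Type*) [MetricSpace C] : Prop :=
  ∀ q : C, ∀ r > 0, ∃ u y z, 0 < u ∧ u < r ∧ dist q y = u ∧ dist q z = u ∧ dist y z = (u : ℝ)

lemma tip_leg {C : Type} [MetricSpace C] [CompactSpace C] {N : ℕ} (p : C) (ell : Fin N → ℝ)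
    (j : Fin N) (h0 : 0 ≤ ell j) :
    Tip (wleg p ell j ⟨ell j, h0, le_rfl⟩) (ell j) := by
  have key : ∀ y : wedge p ell, dist (wleg p ell j ⟨ell j, h0, le_rfl⟩) y < ell j →
      ∃ t, y = wleg p ell j t := by
    intro y hy
    rcases wedge_cases y with ⟨c, rfl⟩ | ⟨i, t, rfl⟩
    · rw [wlc] at hy
      have := dist_nonneg (x := c) (y := p)
      simp only at hy
      linarith
    · rcases eq_or_ne j i with rfl | hij
      · exact ⟨t, rfl⟩
      · rw [wll_ne p ell hij] at hy
        have := t.2.1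
        simp only at hy
        linarith
  intro y z hy hz
  obtain ⟨s, rfl⟩ := key y hy
  obtain ⟨t, rfl⟩ := key z hz
  rw [wll, wll, wll, abs_of_nonneg (sub_nonneg.mpr s.2.2), abs_of_nonneg (sub_nonneg.mpr t.2.2),
    abs_sub_comm]
  congr 1
  ring

lemma not_tip_leg {C : Type} [MetricSpace C] [CompactSpace C] {N : ℕ} (hC : Fork C) (p : C)
    (ell : Fin N → ℝ) (j : Fin N) (h0 : 0 ≤ ell j) (r : ℝ) (hr : ell j < r) :
    ¬ Tip (wleg p ell j ⟨ell j, h0, le_rfl⟩) r := by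
  intro h
  obtain ⟨u, y, z, hu, hur, hy, hz, hyz⟩ := hC p (r - ell j) (by linarith)
  have := h (wcore p ell y) (wcore p ell z) (by rw [wlc, dist_comm, hy]; simp only; linarith)
    (by rw [wlc, dist_comm, hz]; simp only; linarith)
  rw [wlc, wlc, wcc, hyz, dist_comm y, dist_comm z, hy, hz, sub_self, abs_zero] at this
  linarith

lemma hasLen_wedge {C : Type} [MetricSpace C] [CompactSpace C] {N : ℕ} (hC : Fork C) (p : C)
    (ell : Fin N → ℝ) (j : Fin N) (h0 : 0 ≤ ell j) : HasLen (wedge p ell) (ell j) :=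
  ⟨_, tip_leg p ell j h0, fun r hr => not_tip_leg hC p ell j h0 r hr⟩

lemma hasLen_wedge_imp {C : Type} [MetricSpace C] [CompactSpace C] {N : ℕ} (hC : Fork C) (p : C)
    (ell : Fin N → ℝ) (L : ℝ) (hL : 0 < L) (h : HasLen (wedge p ell) L) : ∃ j, L = ell j := by
  have hcore : ∀ c, ¬ Tip (wcore p ell c) L := by
    intro c h
    obtain ⟨u, y, z, hu, hur, hy, hz, hyz⟩ := hC c L hL
    have := h (wcore p ell y) (wcore p ell z) (by rw [wcc, hy]; exact hur)
      (by rw [wcc, hz]; exact hur)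
    rw [wcc, wcc, wcc, hy, hz, hyz, sub_self, abs_zero] at this
    linarith
  obtain ⟨q, h1, h2⟩ := h
  rcases wedge_cases q with ⟨c, rfl⟩ | ⟨j, t, rfl⟩
  · exact absurd h1 (hcore c)
  · refine ⟨j, ?_⟩
    obtain ⟨t, ht0, ht1⟩ := t
    rcases eq_or_lt_of_le ht0 with h | ht0'
    · subst h
      have : wleg p ell j ⟨0, ht0, ht1⟩ = wcore p ell p := Subtype.ext (leg_zero p j)
      rw [this] at h1
      exact absurd h1 (hcore p)
    rcases eq_or_lt_of_le ht1 with h | ht1'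
    · subst h
      by_contra hne
      rcases lt_or_gt_of_ne hne with h | h
      · exact h2 _ h (tip_leg p ell j ht0)
      · exact not_tip_leg hC p ell j ht0 L h h1
    · exfalso
      obtain ⟨u, hu0, hu⟩ := exists_between (lt_min (lt_min ht0' (sub_pos.mpr ht1')) hL)
      rw [lt_min_iff, lt_min_iff] at hu
      obtain ⟨⟨hu1, hu2⟩, hu3⟩ := hu
      have hm1 : t - u ∈ Set.Icc 0 (ell j) := ⟨by linarith, by linarith⟩
      have hm2 : t + u ∈ Set.Icc 0 (ell j) := ⟨by linarith, by linarith⟩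
      have e1 : |t - (t - u)| = u := by rw [sub_sub_cancel, abs_of_pos hu0]
      have e2 : |t - (t + u)| = u := by rw [sub_add_cancel_left, abs_neg, abs_of_pos hu0]
      have e3 : |t - u - (t + u)| = 2 * u := by
        rw [abs_sub_comm, abs_of_nonneg (by linarith)]; ring
      have := h1 (wleg p ell j ⟨_, hm1⟩) (wleg p ell j ⟨_, hm2⟩)
        (by rw [wll, e1]; exact hu3) (by rw [wll, e2]; exact hu3)
      rw [wll, wll, wll, e1, e2, e3, sub_self, abs_zero] at this
      linarith

lemma fork_core (X : Type) [MetricSpace X] {δ : ℝ} (hδ : 0 < δ) :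
    Fork (X × (Set.Icc (0:ℝ) δ × Set.Icc (0:ℝ) δ)) := by
  rintro ⟨x, s, t⟩ r hr
  obtain ⟨u, hu0, hu⟩ := exists_between (lt_min (half_pos hδ) hr)
  rw [lt_min_iff] at hu
  have mv : ∀ s : Set.Icc (0:ℝ) δ, ∃ s' : Set.Icc (0:ℝ) δ, dist s s' = u := by
    rintro ⟨s, h0, h1⟩
    rcases le_total s (δ / 2) with h | h
    · refine ⟨⟨s + u, by linarith, by linarith⟩, ?_⟩
      rw [Subtype.dist_eq, Real.dist_eq, sub_add_cancel_left, abs_neg, abs_of_pos hu0]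
    · refine ⟨⟨s - u, by linarith, by linarith⟩, ?_⟩
      rw [Subtype.dist_eq, Real.dist_eq, sub_sub_cancel, abs_of_pos hu0]
  obtain ⟨s', hs⟩ := mv s
  obtain ⟨t', ht⟩ := mv t
  refine ⟨u, (x, s', t), (x, s, t'), hu0, hu.2, ?_, ?_, ?_⟩
  · simp [Prod.dist_eq, hs, hu0.le]
  · simp [Prod.dist_eq, ht, hu0.le]
  · simp [Prod.dist_eq, dist_comm s' s, hs, ht, hu0.le]

lemma wedge_near (X : Type) [MetricSpace X] [CompactSpace X] [Nonempty X] {δ : ℝ} (hδ : 0 ≤ δ)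
    {N : ℕ} (x₀ : X) (ell : Fin N → ℝ) (hell : ∀ j, ell j ≤ δ) :
    dist (wedge ((x₀, ⟨0, le_rfl, hδ⟩, ⟨0, le_rfl, hδ⟩) :
      X × (Set.Icc (0:ℝ) δ × Set.Icc (0:ℝ) δ)) ell).toGHSpace (toGHSpace X) ≤ δ := by
  set o : Set.Icc (0:ℝ) δ := ⟨0, le_rfl, hδ⟩
  let φ : X → Amb (X × (Set.Icc (0:ℝ) δ × Set.Icc (0:ℝ) δ)) N := fun x => core N (x, o, o)
  have hφ : Isometry φ := by
    refine Isometry.of_dist_eq fun x y => ?_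
    simp only [φ, core_core]
    simp [Prod.dist_eq]
  let K : TopologicalSpace.NonemptyCompacts (Amb (X × (Set.Icc (0:ℝ) δ × Set.Icc (0:ℝ) δ)) N) :=
    ⟨⟨Set.range φ, isCompact_range hφ.continuous⟩, Set.range_nonempty φ⟩
  rw [← toGHSpace_of_isometry K φ hφ rfl]
  refine (ghDist_le_nonemptyCompacts_dist _ _).trans ?_
  rw [Metric.NonemptyCompacts.dist_eq]
  refine Metric.hausdorffDist_le_of_mem_dist hδ ?_ ?_
  · intro z hz
    rcases mem_wedge.mp hz with ⟨⟨x, s, t⟩, rfl⟩ | ⟨j, t, ht, rfl⟩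
    · refine ⟨_, ⟨x, rfl⟩, ?_⟩
      simp only [φ, core_core]
      have ho : ∀ s : Set.Icc (0:ℝ) δ, dist s o ≤ δ := by
        intro s
        rw [Subtype.dist_eq, Real.dist_eq]
        simp only [o, sub_zero]
        rw [abs_of_nonneg s.2.1]; exact s.2.2
      simp [Prod.dist_eq, hδ, ho]
    · refine ⟨_, ⟨x₀, rfl⟩, ?_⟩
      rw [dist_comm]
      simp only [φ]
      rw [core_leg _ _ _ ht.1, dist_self, zero_add]
      exact ht.2.trans (hell j)
  · rintro _ ⟨x, rfl⟩
    exact ⟨_, mem_wedge.mpr (Or.inl ⟨_, rfl⟩), by rw [dist_self]; exact hδ⟩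

theorem ghGeodesic_dim (U : Set ↥GHGeodesic) (hU : IsOpen U) (hne : U.Nonempty) (n : ℕ) :
    ¬ CovDimLE ↥U n := by
  obtain ⟨⟨P, hP⟩, hPU⟩ := hne
  obtain ⟨ε, hε, hball⟩ := Metric.isOpen_iff.mp hU _ hPU
  let δ := ε / 2
  have hδ : 0 < δ := half_pos hε
  let X := P.Rep
  let C := X × (Set.Icc (0:ℝ) δ × Set.Icc (0:ℝ) δ)
  have hC : IsGeodesicSpace C :=
    IsGeodesicSpace.prod hP ((isGeodesicSpace_Icc 0 δ).prod (isGeodesicSpace_Icc 0 δ))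
  have hF : Fork C := fork_core X hδ
  obtain ⟨x₀⟩ : Nonempty X := inferInstance
  let p : C := (x₀, ⟨0, le_rfl, hδ.le⟩, ⟨0, le_rfl, hδ.le⟩)
  let κ : ℝ := δ / (2 * n + 2)
  have hκ : 0 < κ := by positivity
  have hκ' : κ * (2 * n + 2) = δ := div_mul_cancel₀ _ (by positivity)
  let ell : (Fin (n+1) → unitInterval) → Fin (n+1) → ℝ :=
    fun a j => κ * (2 * (j : ℕ) + 1 + (a j : ℝ))
  have hell0 : ∀ a j, 0 < ell a j := by
    intro a j
    have := (a j).2.1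
    positivity
  have hellδ : ∀ a j, ell a j ≤ δ := by
    intro a j
    have h1 := (a j).2.2
    have h2 : ((j : ℕ) : ℝ) ≤ n := by exact_mod_cast Nat.lt_succ_iff.mp j.isLt
    rw [← hκ']
    exact mul_le_mul_of_nonneg_left (by linarith) hκ.le
  let F : (Fin (n+1) → unitInterval) → ↥U := fun a =>
    ⟨⟨(wedge p (ell a)).toGHSpace, toGHSpace_mem (wedge_geodesic hC p (ell a))⟩, by
      apply hball
      rw [Metric.mem_ball, Subtype.dist_eq]
      have := wedge_near X hδ.le x₀ (ell a) (hellδ a)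
      rw [GHSpace.toGHSpace_rep] at this
      refine lt_of_le_of_lt this ?_
      exact half_lt_self hε⟩
  refine not_covDimLE n F ?_ ?_
  · refine Continuous.subtype_mk (Continuous.subtype_mk ?_ _) _
    refine toGHSpace_continuous.comp ?_
    refine (LipschitzWith.of_dist_le_mul (K := ⟨κ, hκ.le⟩) fun a b => ?_).continuous
    refine wedge_dist_le p _ _ (fun j => (hell0 a j).le) (fun j => (hell0 b j).le) _
      (mul_nonneg hκ.le dist_nonneg) fun j => ?_
    have h1 : ell a j - ell b j = κ * ((a j : ℝ) - b j) := by simp only [ell]; ring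
    rw [h1, abs_mul, abs_of_pos hκ]
    exact mul_le_mul_of_nonneg_left (dist_le_pi_dist a b j) hκ.le
  · intro j a b ha hb hab
    have h1 : (wedge p (ell a)).toGHSpace = (wedge p (ell b)).toGHSpace :=
      congrArg (fun z : ↥U => (z : ↥GHGeodesic).1) hab
    obtain ⟨e⟩ := toGHSpace_eq_toGHSpace_iff_isometryEquiv.mp h1
    have h2 := (hasLen_wedge hF p (ell b) j (hell0 b j).le).map e.symm
    obtain ⟨i, hi⟩ := hasLen_wedge_imp hF p (ell a) _ (hell0 b j) h2
    have h3 := mul_left_cancel₀ hκ.ne' hi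
    have h4 := (a i).2.1
    have h5 := (a i).2.2
    rw [hb] at h3
    rcases lt_trichotomy i j with h | h | h
    · have h6 : ((i : ℕ) : ℝ) + 1 ≤ (j : ℕ) := by exact_mod_cast h
      simp only [Set.Icc.coe_one] at h3
      linarith
    · subst h
      rw [ha] at h3
      simp at h3
    · have h6 : ((j : ℕ) : ℝ) + 1 ≤ (i : ℕ) := by exact_mod_cast h
      simp only [Set.Icc.coe_one] at h3
      linarith

/-- The set `𝒢` of all compact geodesic metric spaces is
path-connected as a subspace of the Gromov–Hausdorff space, and every nonempty
open subset of `𝒢` has infinite covering dimension. -/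
theorem statement6 :
    PathConnectedSpace ↥GHGeodesic ∧
    ∀ U : Set ↥GHGeodesic, IsOpen U → U.Nonempty →
      ¬ ∃ n : ℕ, CovDimLE ↥U n := by
  exact ⟨ghGeodesic_pathConnected, fun U hU hne ⟨n, hn⟩ => ghGeodesic_dim U hU hne n hn⟩
end

section
/- The set 𝒵 of all compact CAT(0) metric spaces is path-connected as a subspace of the Gromov–Hausdorff space, and every nonempty open subset of 𝒵 (in the subspace topology) has infinite covering dimension. -/
open GromovHausdorff

/-- A metric space is *CAT(0)* if it is geodesic and every geodesic triangle
satisfies the Euclidean comparison inequality; equivalently (the formulation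
used here), the comparison (CN) inequality holds along every geodesic. -/
def IsCAT0Space (X : Type*) [MetricSpace X] : Prop :=
  IsGeodesicSpace X ∧
  ∀ x y z : X, ∀ γ : ℝ → X, γ 0 = x → γ 1 = y →
    (∀ s ∈ Set.Icc (0 : ℝ) 1, ∀ t ∈ Set.Icc (0 : ℝ) 1,
      dist (γ s) (γ t) = |s - t| * dist x y) →
    ∀ t ∈ Set.Icc (0 : ℝ) 1,
      dist z (γ t) ^ 2 ≤
        (1 - t) * dist z x ^ 2 + t * dist z y ^ 2 - t * (1 - t) * dist x y ^ 2

/-- The subset `𝒵` of the Gromov–Hausdorff space consisting of (isometry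
classes of) compact CAT(0) metric spaces. -/
def GHCat0 : Set GHSpace := {p | IsCAT0Space p.Rep}

section Lebesgue
open MeasureTheory

/-- Determinants `det (1 + t M)` at `t = 1` are a universal combination of values at other nodes. -/
lemma det_interp (N : ℕ) (v : Fin (N + 1) → ℝ) (hv : Function.Injective v) :
    ∃ w : Fin (N + 1) → ℝ, ∑ i, w i = 1 ∧
      ∀ M : (Fin N → ℝ) →L[ℝ] (Fin N → ℝ),
        (1 + M).det = ∑ i, w i * (1 + v i • M).det := by
  classical
  refine ⟨fun i => (Lagrange.basis Finset.univ v i).eval 1, ?_, ?_⟩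
  · have := Lagrange.sum_basis (s := Finset.univ) (v := v) hv.injOn Finset.univ_nonempty
    have := congrArg (Polynomial.eval 1) this
    simpa [Polynomial.eval_finsetSum] using this
  · intro M
    let A : Matrix (Fin N) (Fin N) ℝ := LinearMap.toMatrix' (M : (Fin N → ℝ) →ₗ[ℝ] (Fin N → ℝ))
    let p : Polynomial ℝ :=
      ((Polynomial.X : Polynomial ℝ) • A.map ⇑Polynomial.C + (1 : Matrix (Fin N) (Fin N) ℝ).map ⇑Polynomial.C).det
    have hdeg : p.degree < ((Finset.univ : Finset (Fin (N+1))).card : WithBot ℕ) := by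
      have := Polynomial.natDegree_det_X_add_C_le A 1
      refine lt_of_le_of_lt Polynomial.degree_le_natDegree ?_
      simp only [Finset.card_univ, Fintype.card_fin] at this ⊢
      exact_mod_cast Nat.lt_succ_of_le this
    have hev : ∀ t : ℝ, p.eval t = (1 + t • M).det := by
      intro t
      have h1 : p.eval t = (t • A + 1).det := by
        have := (Polynomial.evalRingHom t).map_det
          ((Polynomial.X : Polynomial ℝ) • A.map ⇑Polynomial.C + (1 : Matrix (Fin N) (Fin N) ℝ).map ⇑Polynomial.C)
        change Polynomial.eval t _ = _ at this
        rw [this]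
        congr 1
        ext i j
        simp only [Matrix.one_apply, RingHom.mapMatrix_apply, Matrix.map_apply, Matrix.add_apply,
          Matrix.smul_apply, smul_eq_mul, map_add, Polynomial.coe_evalRingHom, Polynomial.eval_mul,
          Polynomial.eval_X, Polynomial.eval_C]
      rw [h1]
      have h2 : (1 + t • M).det = LinearMap.det (1 + t • (M : (Fin N → ℝ) →ₗ[ℝ] (Fin N → ℝ))) := rfl
      rw [h2, ← LinearMap.det_toMatrix']
      congr 1
      simp only [map_add, map_smul, LinearMap.toMatrix'_one]
      rw [add_comm]
    have hI := Lagrange.eq_interpolate (s := Finset.univ) (v := v) hv.injOn hdeg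
    have := congrArg (Polynomial.eval 1) hI
    rw [hev, Lagrange.interpolate_apply, one_smul] at this
    rw [this, Polynomial.eval_finsetSum]
    refine Finset.sum_congr rfl fun i _ => ?_
    simp only [Polynomial.eval_mul, Polynomial.eval_C, hev]
    ring

/-- Coordinatewise clamp to the unit cube. -/
noncomputable def cclamp {N : ℕ} (x : Fin N → ℝ) : Fin N → ℝ := fun k => max 0 (min 1 (x k))

lemma cclamp_lip {N : ℕ} : LipschitzWith 1 (cclamp (N := N)) := by
  refine LipschitzWith.of_dist_le_mul fun x y => ?_
  rw [NNReal.coe_one, one_mul, dist_pi_le_iff dist_nonneg]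
  intro k
  refine le_trans ?_ (dist_le_pi_dist x y k)
  simp only [cclamp, Real.dist_eq]
  calc _ ≤ max |(0:ℝ) - 0| |min 1 (x k) - min 1 (y k)| := abs_max_sub_max_le_max _ _ _ _
    _ ≤ |min 1 (x k) - min 1 (y k)| := by simp
    _ ≤ max |(1:ℝ) - 1| |x k - y k| := abs_min_sub_min_le_max _ _ _ _
    _ ≤ _ := by simp

lemma exists_det_ne_zero {N : ℕ} (g : (Fin N → ℝ) → (Fin N → ℝ)) (K : NNReal)
    (hg : LipschitzWith K g) (h0 : ∀ x k, 0 ≤ g x k) (h1 : ∀ x k, g x k ≤ 1)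
    (hA : ∀ x k, x k ≤ 0 → g x k = 0) (hB : ∀ x k, 1 ≤ x k → g x k = 1) :
    ∃ x ∈ Set.Icc (0 : Fin N → ℝ) 1, (fderiv ℝ g x).det ≠ 0 := by
  by_contra hcon
  push Not at hcon
  set h : (Fin N → ℝ) → (Fin N → ℝ) := fun x => g x - cclamp x with hh
  set L : NNReal := K + 1 with hL
  have hLip : LipschitzWith L h := hg.sub cclamp_lip
  have hzero : ∀ x k, x k ≤ 0 → h x k = 0 := by
    intro x k hx
    simp only [hh, Pi.sub_apply, hA x k hx, cclamp]
    rw [min_eq_right (by linarith), max_eq_left hx]; simp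
  have hone : ∀ x k, 1 ≤ x k → h x k = 0 := by
    intro x k hx
    simp only [hh, Pi.sub_apply, hB x k hx, cclamp]
    rw [min_eq_left (by linarith), max_eq_right (by norm_num)]; simp
  let O : Set (Fin N → ℝ) := Set.univ.pi fun _ => Set.Ioo (0:ℝ) 1
  have hOopen : IsOpen O := isOpen_set_pi Set.finite_univ fun _ _ => isOpen_Ioo
  have hOvol : volume O = 1 := by
    have := Real.volume_pi_Ioo (a := fun _ : Fin N => (0:ℝ)) (b := fun _ => 1)
    simpa using this
  have hOmem : ∀ x, x ∈ O ↔ ∀ k, 0 < x k ∧ x k < 1 := by intro x; simp [O]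
  have hcl : ∀ x ∈ O, cclamp x = x := by
    intro x hx; rw [hOmem] at hx
    funext k
    simp only [cclamp]
    rw [min_eq_right (hx k).2.le, max_eq_right (hx k).1.le]
  let s : Set (Fin N → ℝ) := O ∩ {x | DifferentiableAt ℝ h x}
  have hs : MeasurableSet s := hOopen.measurableSet.inter (measurableSet_of_differentiableAt ℝ h)
  have hnull : volume (O \ s) = 0 := by
    have := hLip.ae_differentiableAt (μ := volume)
    rw [ae_iff] at this
    refine measure_mono_null ?_ this
    rintro x ⟨hx, hx2⟩ hx3
    exact hx2 ⟨hx, hx3⟩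
  have hfd : ∀ x ∈ s, 1 + fderiv ℝ h x = fderiv ℝ g x := by
    rintro x ⟨hx, hx2⟩
    have he : g =ᶠ[nhds x] fun y => y + h y := by
      filter_upwards [hOopen.mem_nhds hx] with y hy
      simp [hh, hcl y hy]
    have hx' : HasFDerivAt h (fderiv ℝ h x) x := DifferentiableAt.hasFDerivAt hx2
    rw [he.fderiv_eq]
    exact ((hasFDerivAt_id x).add hx').fderiv.symm
  -- small parameters
  have hev : ∃ t0 : ℝ, 0 < t0 ∧ t0 < 1 ∧ t0 * L < 1 ∧ ∀ t, 0 < t → t ≤ t0 → ∀ x,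
      0 < (1 + t • fderiv ℝ h x).det := by
    have hc : Continuous fun f : (Fin N → ℝ) →L[ℝ] (Fin N → ℝ) => f.det :=
      ContinuousLinearMap.continuous_det
    have hp : ∀ᶠ f in nhds (1 : (Fin N → ℝ) →L[ℝ] (Fin N → ℝ)), 0 < f.det := by
      refine hc.continuousAt.eventually (lt_mem_nhds ?_)
      have : (1 : (Fin N → ℝ) →L[ℝ] (Fin N → ℝ)).det = 1 :=
        LinearMap.det_id
      show 0 < (1 : (Fin N → ℝ) →L[ℝ] (Fin N → ℝ)).det
      rw [this]; exact one_pos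
    obtain ⟨δ, hδ, hball⟩ := Metric.eventually_nhds_iff.1 hp
    have hLpos : (0:ℝ) < L := by positivity
    refine ⟨min (1/2) (min (1 / (2 * L)) (δ / (2 * L))), by positivity, ?_, ?_, ?_⟩
    · exact lt_of_le_of_lt (min_le_left _ _) (by norm_num)
    · have : min (1/2) (min (1 / (2 * (L:ℝ))) (δ / (2 * (L:ℝ)))) ≤ 1 / (2 * (L:ℝ)) :=
        (min_le_right _ _).trans (min_le_left _ _)
      calc _ ≤ 1 / (2 * (L:ℝ)) * L := by gcongr
        _ = 1/2 := by field_simp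
        _ < 1 := by norm_num
    · intro t ht0 ht x
      apply hball
      rw [dist_eq_norm, add_sub_cancel_left, norm_smul, Real.norm_of_nonneg ht0.le]
      have h3 : ‖fderiv ℝ h x‖ ≤ L := norm_fderiv_le_of_lipschitz ℝ hLip
      have : t ≤ δ / (2 * (L:ℝ)) := ht.trans ((min_le_right _ _).trans (min_le_right _ _))
      calc t * ‖fderiv ℝ h x‖ ≤ δ / (2 * (L:ℝ)) * L := by gcongr
        _ = δ / 2 := by field_simp
        _ < δ := by linarith
  obtain ⟨t0, ht0, ht01, ht0L, hdet⟩ := hev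
  have hmeas : ∀ t : ℝ, Measurable fun x => (1 + t • fderiv ℝ h x).det := by
    intro t
    have hc : Continuous fun f : (Fin N → ℝ) →L[ℝ] (Fin N → ℝ) => (1 + t • f).det :=
      ContinuousLinearMap.continuous_det.comp (by fun_prop)
    exact hc.measurable.comp (measurable_fderiv ℝ h)
  -- the key volume computation
  have key : ∀ t, 0 < t → t ≤ t0 →
      ∫⁻ x in s, ENNReal.ofReal ((1 + t • fderiv ℝ h x).det) = 1 := by
    intro t htpos htle
    let G : (Fin N → ℝ) → (Fin N → ℝ) := fun x => x + t • h x
    have htL : t * L < 1 := lt_of_le_of_lt (by gcongr) ht0L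
    have ht1 : t < 1 := lt_of_le_of_lt htle ht01
    have hGk : ∀ x k, G x k = x k + t * h x k := fun x k => by simp [G]
    have hGlip : LipschitzWith (1 + ‖t‖₊ * L) G := LipschitzWith.id.add ((lipschitzWith_smul t).comp hLip)
    have hinj : Function.Injective G := by
      intro x y hxy
      have e : x - y = t • (h y - h x) := by
        have : x + t • h x = y + t • h y := hxy
        rw [smul_sub, sub_eq_sub_iff_add_eq_add, this]; abel
      have h4 : dist x y ≤ t * L * dist x y := by
        have h5 := hLip.dist_le_mul y x
        calc dist x y = ‖x - y‖ := dist_eq_norm _ _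
          _ = t * dist (h y) (h x) := by
            rw [e, norm_smul, Real.norm_of_nonneg htpos.le, dist_eq_norm]
          _ ≤ t * (L * dist y x) := by gcongr
          _ = _ := by rw [dist_comm y x]; ring
      have h6 : 0 ≤ dist x y := dist_nonneg
      have : dist x y = 0 := by nlinarith
      exact dist_eq_zero.1 this
    have hsurj : Function.Surjective G := by
      intro y
      have hlip2 : LipschitzWith (‖t‖₊ * L) (fun x => y - t • h x) := by
        have := (LipschitzWith.const y).sub ((lipschitzWith_smul t).comp hLip)
        simpa using this
      have hcontr : ContractingWith (‖t‖₊ * L) (fun x => y - t • h x) := by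
        refine ⟨?_, hlip2⟩
        rw [← NNReal.coe_lt_coe]
        simpa [Real.norm_of_nonneg htpos.le, abs_of_pos htpos] using htL
      have := hcontr.fixedPoint_isFixedPt
      refine ⟨ContractingWith.fixedPoint _ hcontr, ?_⟩
      have h7 : y - t • h (ContractingWith.fixedPoint _ hcontr) = ContractingWith.fixedPoint _ hcontr := this
      simp only [G]
      nth_rewrite 1 [← h7]
      simp
    have himg : G '' O = O := by
      apply Set.Subset.antisymm
      · rintro _ ⟨x, hx, rfl⟩
        have hx' := (hOmem x).1 hx
        rw [hOmem]
        intro k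
        have : h x k = g x k - x k := by simp [hh, hcl x hx]
        rw [hGk, this]
        have := hx' k; have := h0 x k; have := h1 x k
        constructor <;> nlinarith
      · intro y hy
        obtain ⟨x, rfl⟩ := hsurj y
        refine ⟨x, ?_, rfl⟩
        rw [hOmem] at hy ⊢
        intro k
        have hk := hy k
        rw [hGk] at hk
        constructor
        · by_contra hc
          rw [hzero x k (not_lt.1 hc)] at hk; linarith
        · by_contra hc
          rw [hone x k (not_lt.1 hc)] at hk; linarith
    have hnull2 : volume (G '' (O \ s)) = 0 := by
      have h8 := hGlip.hausdorffMeasure_image_le (d := (Fintype.card (Fin N) : ℝ)) (by positivity) (O \ s)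
      rw [hausdorffMeasure_pi_real, hnull, mul_zero] at h8
      exact le_antisymm h8 (zero_le)
    have hvol : volume (G '' s) = 1 := by
      apply le_antisymm
      · rw [← hOvol]
        refine le_trans ?_ (congrArg volume himg).le
        exact measure_mono (Set.image_mono Set.inter_subset_left)
      · calc (1 : ENNReal) = volume (G '' O) := by rw [himg, hOvol]
          _ ≤ volume (G '' s ∪ G '' (O \ s)) := by
            apply measure_mono
            rw [← Set.image_union]
            apply Set.image_mono
            intro x hx
            by_cases hxs : x ∈ s
            · exact Or.inl hxs
            · exact Or.inr ⟨hx, hxs⟩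
          _ ≤ volume (G '' s) + volume (G '' (O \ s)) := measure_union_le _ _
          _ = volume (G '' s) := by rw [hnull2, add_zero]
    rw [← hvol, ← lintegral_abs_det_fderiv_eq_addHaar_image volume hs (f := G)
      (f' := fun x => 1 + t • fderiv ℝ h x) ?_ hinj.injOn]
    · refine lintegral_congr fun x => ?_
      rw [abs_of_pos (hdet t htpos htle x)]
    · rintro x ⟨_, hx⟩
      have hx' : HasFDerivAt h (fderiv ℝ h x) x := DifferentiableAt.hasFDerivAt hx
      exact ((hasFDerivAt_id x).add (hx'.const_smul t)).hasFDerivWithinAt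
  let v : Fin (N + 1) → ℝ := fun i => t0 / (i + 1)
  have hvpos : ∀ i, 0 < v i := fun i => by positivity
  have hvle : ∀ i, v i ≤ t0 := fun i => by
    apply div_le_self ht0.le
    linarith [show (0:ℝ) ≤ ((i:ℕ):ℝ) from by positivity]
  have hvinj : Function.Injective v := by
    intro i j hij
    simp only [v] at hij
    have h9 : ((i:ℕ):ℝ) + 1 ≠ 0 := by positivity
    have h10 : ((j:ℕ):ℝ) + 1 ≠ 0 := by positivity
    rw [div_eq_div_iff h9 h10] at hij
    have := mul_left_cancel₀ ht0.ne' hij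
    have : ((i:ℕ):ℝ) = (j:ℕ) := by linarith
    exact Fin.ext (by exact_mod_cast this)
  obtain ⟨w, hw1, hw⟩ := det_interp N v hvinj
  have hintg : ∀ i, Integrable (fun x => (1 + v i • fderiv ℝ h x).det) (volume.restrict s) := by
    intro i
    refine ⟨(hmeas _).aestronglyMeasurable, ?_⟩
    rw [hasFiniteIntegral_iff_ofReal (ae_of_all _ fun x => (hdet _ (hvpos i) (hvle i) x).le),
      key _ (hvpos i) (hvle i)]
    exact ENNReal.one_lt_top
  have hval : ∀ i, ∫ x in s, (1 + v i • fderiv ℝ h x).det = 1 := by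
    intro i
    rw [integral_eq_lintegral_of_nonneg_ae
      (ae_of_all _ fun x => (hdet _ (hvpos i) (hvle i) x).le) (hmeas _).aestronglyMeasurable,
      key _ (hvpos i) (hvle i)]
    rfl
  have hfin : ∫ x in s, (1 + fderiv ℝ h x).det = 1 := by
    rw [integral_congr_ae (ae_of_all _ fun x => hw (fderiv ℝ h x)),
      integral_finsetSum _ fun i _ => (hintg i).const_mul _]
    simp_rw [integral_const_mul, hval, mul_one]
    exact hw1
  have hfin0 : ∫ x in s, (1 + fderiv ℝ h x).det = 0 := by
    rw [setIntegral_congr_fun (g := fun _ => (0:ℝ)) hs]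
    · simp
    · intro x hx
      simp only [hfd x hx, hcon x ⟨fun k => ((hOmem x).1 hx.1 k).1.le, fun k => ((hOmem x).1 hx.1 k).2.le⟩]
  rw [hfin] at hfin0
  exact one_ne_zero hfin0

lemma det_eq_zero_of_row {N : ℕ} (g : (Fin N → ℝ) → (Fin N → ℝ)) (x : Fin N → ℝ) (k : Fin N)
    (c : ℝ) (h : ∀ᶠ y in nhds x, g y k = c) : (fderiv ℝ g x).det = 0 := by
  have hrow : ∀ u, fderiv ℝ g x u k = 0 := by
    by_cases hd : DifferentiableAt ℝ g x
    · intro u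
      have h1 := (hasFDerivAt_pi'.1 hd.hasFDerivAt) k
      have h2 : HasFDerivAt (fun y => g y k) (0 : (Fin N → ℝ) →L[ℝ] ℝ) x :=
        (hasFDerivAt_const c x).congr_of_eventuallyEq h
      have := h1.unique h2
      simpa using congrArg (fun f => f u) this
    · intro u; rw [fderiv_zero_of_not_differentiableAt hd]; simp
  by_contra hne
  have hu : IsUnit (LinearMap.det (fderiv ℝ g x : (Fin N → ℝ) →ₗ[ℝ] (Fin N → ℝ))) :=
    isUnit_iff_ne_zero.2 hne
  have hs : Function.Surjective (fderiv ℝ g x : (Fin N → ℝ) →ₗ[ℝ] (Fin N → ℝ)) :=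
    ((Module.End.isUnit_iff _).1 ((LinearMap.isUnit_iff_isUnit_det _).2 hu)).2
  obtain ⟨u, hu2⟩ := hs (fun _ => 1)
  have := congrFun hu2 k
  have h3 := hrow u
  simp only [ContinuousLinearMap.coe_coe] at this
  rw [h3] at this
  exact zero_ne_one this

lemma no_colored_cover {N : ℕ} {ι : Type*} (W : Fin N → ι → Set (Fin N → ℝ))
    (hop : ∀ k i, IsOpen (W k i))
    (hdisj : ∀ k i j x, x ∈ W k i → x ∈ W k j → i = j)
    (hcov : ∀ x, ∃ k i, x ∈ W k i)
    (hsep : ∀ k i x y, x ∈ W k i → y ∈ W k i → x k ≤ 0 → 1 ≤ y k → False) : False := by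
  obtain ⟨δ0, hδ0, hleb⟩ := lebesgue_number_lemma_of_metric (s := Set.Icc (0 : Fin N → ℝ) 1)
    (c := fun q : Fin N × ι => W q.1 q.2) isCompact_Icc (fun q => hop _ _)
    (fun x _ => by
      obtain ⟨k, i, h⟩ := hcov x
      exact Set.mem_iUnion.2 ⟨(k, i), h⟩)
  set δ := min δ0 1 with hδdef
  have hδ : 0 < δ := lt_min hδ0 one_pos
  have hδ1 : δ ≤ 1 := min_le_right _ _
  have hleb' : ∀ x ∈ Set.Icc (0 : Fin N → ℝ) 1, ∃ k i, Metric.ball x δ ⊆ W k i := by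
    intro x hx
    obtain ⟨q, hq⟩ := hleb x hx
    exact ⟨q.1, q.2, (Metric.ball_subset_ball (min_le_left _ _)).trans hq⟩
  let D : Fin N → Set (Fin N → ℝ) := fun k =>
    {x | x k ≤ 0} ∪ {x | ∃ i, (∃ a ∈ W k i, a k ≤ 0) ∧ Metric.ball x (δ / 2) ⊆ W k i}
  have hDne : ∀ k, (D k).Nonempty := fun k => ⟨0, Or.inl (by simp)⟩
  let g : (Fin N → ℝ) → (Fin N → ℝ) := fun x k => min 1 (4 / δ * Metric.infDist x (D k))
  have hg1 : ∀ x k, (∀ z ∈ D k, δ / 4 ≤ dist x z) → g x k = 1 := by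
    intro x k h
    have : δ / 4 ≤ Metric.infDist x (D k) := (Metric.le_infDist (hDne k)).2 (fun {z} hz => h z hz)
    apply min_eq_left
    calc (1:ℝ) = 4 / δ * (δ / 4) := by field_simp
      _ ≤ _ := by gcongr
  have hg0 : ∀ x k, x ∈ D k → g x k = 0 := by
    intro x k h
    simp only [g, Metric.infDist_zero_of_mem h]; simp
  have hlip : LipschitzWith (Real.toNNReal (4 / δ)) g := by
    refine LipschitzWith.of_dist_le_mul fun x y => ?_
    rw [Real.coe_toNNReal _ (by positivity), dist_pi_le_iff (by positivity)]
    intro k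
    simp only [g, Real.dist_eq]
    calc _ ≤ max |(1:ℝ) - 1| |4 / δ * Metric.infDist x (D k) - 4 / δ * Metric.infDist y (D k)| :=
          abs_min_sub_min_le_max _ _ _ _
      _ ≤ |4 / δ * Metric.infDist x (D k) - 4 / δ * Metric.infDist y (D k)| := by simp
      _ = 4 / δ * |Metric.infDist x (D k) - Metric.infDist y (D k)| := by
        rw [← mul_sub, abs_mul, abs_of_pos (by positivity)]
      _ ≤ 4 / δ * dist x y := by
        gcongr
        have := (Metric.lipschitz_infDist_pt (D k)).dist_le_mul x y
        simpa [Real.dist_eq] using this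
  obtain ⟨x, hx, hdet⟩ := exists_det_ne_zero g _ hlip
    (fun x k => le_min zero_le_one (mul_nonneg (by positivity) Metric.infDist_nonneg))
    (fun x k => min_le_left _ _)
    (fun x k h => hg0 x k (Or.inl h))
    (by
      intro b k hb
      apply hg1
      intro z hz
      by_contra hlt
      push Not at hlt
      rcases hz with hz | ⟨i, ⟨a, ha, hak⟩, hball⟩
      · have h1 := dist_le_pi_dist b z k
        rw [Real.dist_eq] at h1
        have h2 := le_abs_self (b k - z k)
        have hz' : z k ≤ 0 := hz
        linarith
      · exact hsep k i a b ha (hball (by rw [Metric.mem_ball]; linarith)) hak hb)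
  apply hdet
  obtain ⟨k, i, hki⟩ := hleb' x hx
  by_cases hmeet : ∃ a ∈ W k i, a k ≤ 0
  · apply det_eq_zero_of_row g x k 0
    filter_upwards [Metric.ball_mem_nhds x (half_pos hδ)] with y hy
    apply hg0
    refine Or.inr ⟨i, hmeet, fun z hz => hki ?_⟩
    rw [Metric.mem_ball] at *
    linarith [dist_triangle z y x]
  · apply det_eq_zero_of_row g x k 1
    filter_upwards [Metric.ball_mem_nhds x (show 0 < δ / 4 by positivity)] with y hy
    apply hg1
    intro z hz
    by_contra hlt
    push Not at hlt
    rw [Metric.mem_ball] at hy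
    have hzW : z ∈ W k i := by
      apply hki
      rw [Metric.mem_ball]
      have := dist_triangle z y x
      rw [dist_comm z y] at this
      linarith
    rcases hz with hz | ⟨j, hj, hball⟩
    · exact hmeet ⟨z, hzW, hz⟩
    · have : j = i := hdisj k j i z (hball (Metric.mem_ball_self (half_pos hδ))) hzW
      subst this
      exact hmeet hj

lemma cclamp_mem {N : ℕ} (x : Fin N → ℝ) : cclamp x ∈ Set.Icc (0 : Fin N → ℝ) 1 := by
  constructor
  · intro k; exact le_max_left _ _
  · intro k; exact max_le zero_le_one (min_le_left _ _)

lemma not_covDimLE_s7 {T : Type*} [TopologicalSpace T] [T2Space T] (n : ℕ)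
    (φ : (Fin (n + 1) → ℝ) → T) (hφ : Continuous φ)
    (hcl : ∀ x, φ (cclamp x) = φ x)
    (hsep : ∀ k x y, x k = 0 → y k = 1 → φ x ≠ φ y) : ¬ CovDimLE T n := by
  classical
  intro hdim
  let α : Bool → Fin (n + 1) → Set T := fun b k =>
    φ '' {x ∈ Set.Icc (0 : Fin (n + 1) → ℝ) 1 | x k = if b then 0 else 1}
  have hαc : ∀ b k, IsClosed (α b k) := by
    intro b k
    apply IsCompact.isClosed
    apply IsCompact.image _ hφ
    exact isCompact_Icc.inter_right (isClosed_eq (continuous_apply k) continuous_const)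
  have hα0 : ∀ x k, x k ≤ 0 → φ x ∈ α true k := by
    intro x k hx
    refine ⟨cclamp x, ⟨cclamp_mem x, ?_⟩, hcl x⟩
    simp only [cclamp, if_true]
    rw [min_eq_right (by linarith), max_eq_left hx]
  have hα1 : ∀ x k, 1 ≤ x k → φ x ∈ α false k := by
    intro x k hx
    refine ⟨cclamp x, ⟨cclamp_mem x, ?_⟩, hcl x⟩
    simp only [cclamp]
    rw [min_eq_left (by linarith), max_eq_right (by norm_num)]; simp
  have hαd : ∀ k y, y ∈ α true k → y ∉ α false k := by
    rintro k _ ⟨x, ⟨_, hx⟩, rfl⟩ ⟨x', ⟨_, hx'⟩, he⟩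
    exact hsep k x x' (by simpa using hx) (by simpa using hx') he.symm
  obtain ⟨V, hVo, hVc, hVr, hVm⟩ := hdim
    (Set.range fun b : Fin (n + 1) → Bool => ⋂ k, (α (b k) k)ᶜ)
    (by
      rintro _ ⟨b, rfl⟩
      exact isOpen_iInter_of_finite fun k => (hαc _ _).isOpen_compl)
    (by
      rw [Set.eq_univ_iff_forall]
      intro y
      refine ⟨_, ⟨fun k => decide (y ∉ α true k), rfl⟩, ?_⟩
      rw [Set.mem_iInter]
      intro k
      by_cases h : y ∈ α true k
      · simpa [h] using hαd k y h
      · simpa [h] using h)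
  have hVsep : ∀ w ∈ V, ∀ k x y, φ x ∈ w → φ y ∈ w → x k ≤ 0 → 1 ≤ y k → False := by
    intro w hw k x y hx hy hxk hyk
    obtain ⟨_, ⟨b, rfl⟩, hb⟩ := hVr w hw
    have h1 := Set.mem_iInter.1 (hb hx) k
    have h2 := Set.mem_iInter.1 (hb hy) k
    cases hbk : b k
    · rw [hbk] at h2; exact h2 (hα1 y k hyk)
    · rw [hbk] at h1; exact h1 (hα0 x k hxk)
  obtain ⟨F, hF⟩ := (isCompact_Icc (a := (0 : Fin (n + 1) → ℝ)) (b := 1)).elim_finite_subcover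
    (fun w : V => φ ⁻¹' w.1) (fun w => (hVo w.1 w.2).preimage hφ)
    (by
      intro x _
      have : φ x ∈ ⋃₀ V := by rw [hVc]; trivial
      obtain ⟨w, hw, hxw⟩ := this
      exact Set.mem_iUnion.2 ⟨⟨w, hw⟩, hxw⟩)
  have hFc : ∀ x, ∃ w ∈ F, φ x ∈ w.1 := by
    intro x
    have := hF (cclamp_mem x)
    simp only [Set.mem_iUnion, Set.mem_preimage, hcl] at this
    obtain ⟨w, hw, h⟩ := this
    exact ⟨w, hw, h⟩
  let f : V → (Fin (n + 1) → ℝ) → ℝ := fun w x => Metric.infDist x (φ ⁻¹' w.1)ᶜ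
  have hfc : ∀ w, Continuous (f w) := fun w => Metric.continuous_infDist_pt _
  have hfpos : ∀ w x, 0 < f w x ↔ φ x ∈ w.1 := by
    intro w x
    have hcl' : IsClosed (φ ⁻¹' w.1)ᶜ := ((hVo w.1 w.2).preimage hφ).isClosed_compl
    have hne : (φ ⁻¹' w.1)ᶜ.Nonempty := by
      by_contra hne
      rw [Set.not_nonempty_iff_eq_empty, Set.compl_empty_iff, Set.eq_univ_iff_forall] at hne
      exact hVsep w.1 w.2 0 0 1 (hne 0) (hne 1) (by simp) (by simp)
    have := hcl'.notMem_iff_infDist_pos hne (x := x)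
    simp only [f]
    rw [← this]
    simp
  refine no_colored_cover (N := n + 1) (ι := Finset V)
    (fun k S => {x | S ⊆ F ∧ S.card = k + 1 ∧ (∀ i ∈ S, 0 < f i x) ∧
      ∀ i ∈ S, ∀ j ∈ F, j ∉ S → f j x < f i x}) ?_ ?_ ?_ ?_
  · intro k S
    refine IsOpen.and isOpen_const (IsOpen.and isOpen_const (IsOpen.and ?_ ?_))
    · have : {x | ∀ i ∈ S, 0 < f i x} = ⋂ i ∈ S, {x | 0 < f i x} := by ext; simp
      rw [this]
      exact isOpen_biInter_finset fun i _ => isOpen_lt continuous_const (hfc i)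
    · have : {x | ∀ i ∈ S, ∀ j ∈ F, j ∉ S → f j x < f i x} =
          ⋂ i ∈ S, ⋂ j ∈ F \ S, {x | f j x < f i x} := by ext; simp
      rw [this]
      exact isOpen_biInter_finset fun i _ => isOpen_biInter_finset fun j _ =>
        isOpen_lt (hfc j) (hfc i)
  · rintro k S S' x ⟨hS1, hS2, hS3, hS4⟩ ⟨hT1, hT2, hT3, hT4⟩
    by_contra hne
    have h1 : ¬ S ⊆ S' := fun h => hne (Finset.eq_of_subset_of_card_le h (by omega))
    have h2 : ¬ S' ⊆ S := fun h => hne (Finset.eq_of_subset_of_card_le h (by omega)).symm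
    obtain ⟨i, hi, hi'⟩ := Finset.not_subset.1 h1
    obtain ⟨j, hj, hj'⟩ := Finset.not_subset.1 h2
    exact lt_asymm (hS4 i hi j (hT1 hj) hj') (hT4 j hj i (hS1 hi) hi')
  · intro x
    let S := F.filter fun i => 0 < f i x
    have hSne : 0 < S.card := by
      obtain ⟨w, hw, h⟩ := hFc x
      exact Finset.card_pos.2 ⟨w, Finset.mem_filter.2 ⟨hw, (hfpos w x).2 h⟩⟩
    have hSle : S.card ≤ n + 1 := by
      have h1 := hVm (φ x)
      have h2 : ((fun w : V => w.1) '' (S : Set V)) ⊆ {w ∈ V | φ x ∈ w} := by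
        rintro _ ⟨w, hw, rfl⟩
        exact ⟨w.2, (hfpos w x).1 (Finset.mem_filter.1 hw).2⟩
      have h3 := (Set.encard_le_encard h2).trans h1
      rw [Subtype.val_injective.injOn.encard_image, Set.encard_coe_eq_coe_finsetCard] at h3
      exact_mod_cast h3
    refine ⟨⟨S.card - 1, by omega⟩, S, Finset.filter_subset _ _, ?_, ?_, ?_⟩
    · simp only; omega
    · intro i hi; exact (Finset.mem_filter.1 hi).2
    · intro i hi j hjF hj
      have h1 : ¬ 0 < f j x := fun h => hj (Finset.mem_filter.2 ⟨hjF, h⟩)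
      exact lt_of_le_of_lt (not_lt.1 h1) (Finset.mem_filter.1 hi).2
  · rintro k S x y ⟨_, hS2, hS3, _⟩ ⟨_, _, hT3, _⟩ hx hy
    obtain ⟨i, hi⟩ : S.Nonempty := Finset.card_pos.1 (by omega)
    exact hVsep i.1 i.2 k x y ((hfpos i x).1 (hS3 i hi)) ((hfpos i y).1 (hT3 i hi)) hx hy

end Lebesgue

lemma isCAT0_of_good {X : Type*} [MetricSpace X]
    (h : ∀ x y : X, ∃ γ : ℝ → X, γ 0 = x ∧ γ 1 = y ∧
      (∀ s ∈ Set.Icc (0 : ℝ) 1, ∀ t ∈ Set.Icc (0 : ℝ) 1,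
        dist (γ s) (γ t) = |s - t| * dist x y) ∧
      ∀ z, ∀ t ∈ Set.Icc (0 : ℝ) 1, dist z (γ t) ^ 2 ≤
        (1 - t) * dist z x ^ 2 + t * dist z y ^ 2 - t * (1 - t) * dist x y ^ 2) :
    IsCAT0Space X := by
  refine ⟨fun x y => ?_, ?_⟩
  · obtain ⟨γ, h0, h1, h2, _⟩ := h x y
    exact ⟨γ, h0, h1, h2⟩
  · intro x y z γ' h0' h1' h2' t ht
    obtain ⟨γ, h0, h1, h2, h3⟩ := h x y
    have ht0 := ht.1
    have ht1 := ht.2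
    have a1 : dist (γ' t) x = t * dist x y := by
      have := h2' t ht 0 ⟨le_rfl, zero_le_one⟩
      rwa [h0', sub_zero, abs_of_nonneg ht0] at this
    have a2 : dist (γ' t) y = (1 - t) * dist x y := by
      have := h2' t ht 1 ⟨zero_le_one, le_rfl⟩
      rwa [h1', abs_sub_comm, abs_of_nonneg (by linarith)] at this
    have := h3 (γ' t) t ht
    rw [a1, a2] at this
    have h4 : dist (γ' t) (γ t) ^ 2 ≤ 0 := by nlinarith
    have h5 : dist (γ' t) (γ t) = 0 := by
      have := sq_nonneg (dist (γ' t) (γ t))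
      exact pow_eq_zero_iff (two_ne_zero) |>.1 (le_antisymm h4 this)
    rw [dist_eq_zero.1 h5]
    exact h3 z t ht

lemma IsCAT0Space.good {X : Type*} [MetricSpace X] (hX : IsCAT0Space X) (x y : X) :
    ∃ γ : ℝ → X, γ 0 = x ∧ γ 1 = y ∧
      (∀ s ∈ Set.Icc (0 : ℝ) 1, ∀ t ∈ Set.Icc (0 : ℝ) 1,
        dist (γ s) (γ t) = |s - t| * dist x y) ∧
      ∀ z, ∀ t ∈ Set.Icc (0 : ℝ) 1, dist z (γ t) ^ 2 ≤
        (1 - t) * dist z x ^ 2 + t * dist z y ^ 2 - t * (1 - t) * dist x y ^ 2 := by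
  obtain ⟨γ, h0, h1, h2⟩ := hX.1 x y
  exact ⟨γ, h0, h1, h2, fun z => hX.2 x y z γ h0 h1 h2⟩

lemma IsCAT0Space.homothety {X Y : Type*} [MetricSpace X] [MetricSpace Y] (hX : IsCAT0Space X)
    (f : X → Y) (hf : Function.Surjective f) (c : ℝ)
    (hc : ∀ x y, dist (f x) (f y) = c * dist x y) : IsCAT0Space Y := by
  apply isCAT0_of_good
  intro x' y'
  obtain ⟨x, rfl⟩ := hf x'
  obtain ⟨y, rfl⟩ := hf y'
  obtain ⟨γ, h0, h1, h2, h3⟩ := hX.good x y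
  refine ⟨f ∘ γ, by simp [h0], by simp [h1], ?_, ?_⟩
  · intro s hs t ht
    simp only [Function.comp, hc, h2 s hs t ht]; ring
  · intro z' t ht
    obtain ⟨z, rfl⟩ := hf z'
    simp only [Function.comp, hc]
    have := mul_le_mul_of_nonneg_left (h3 z t ht) (sq_nonneg c)
    nlinarith

lemma toGHSpace_mem_GHCat0 {X : Type*} [MetricSpace X] [CompactSpace X] [Nonempty X]
    (hX : IsCAT0Space X) : toGHSpace X ∈ GHCat0 := by
  have h := (toGHSpace X).toGHSpace_rep
  obtain ⟨e⟩ := toGHSpace_eq_toGHSpace_iff_isometryEquiv.1 h.symm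
  exact hX.homothety e e.surjective 1 (fun x y => by rw [e.isometry.dist_eq, one_mul])

lemma scale_path (p : GHSpace) (hp : p ∈ GHCat0) : JoinedIn GHCat0 (toGHSpace PUnit.{1}) p := by
  let E := lp (fun _ : ℕ => ℝ) ⊤
  let Φ : p.Rep → E := kuratowskiEmbedding p.Rep
  have hΦ : Isometry Φ := kuratowskiEmbedding.isometry p.Rep
  let K : ℝ → TopologicalSpace.NonemptyCompacts E := fun c =>
    ⟨⟨Set.range fun x => c • Φ x, isCompact_range (hΦ.continuous.const_smul c)⟩,
      Set.range_nonempty _⟩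
  have hKmem : ∀ c, 0 ≤ c → (K c).toGHSpace ∈ GHCat0 := by
    intro c hc
    refine toGHSpace_mem_GHCat0 (X := K c) (IsCAT0Space.homothety hp
      (fun x => (⟨c • Φ x, ⟨x, rfl⟩⟩ : K c)) ?_ c ?_)
    · rintro ⟨_, x, rfl⟩; exact ⟨x, rfl⟩
    · intro x y
      rw [Subtype.dist_eq, dist_smul₀, hΦ.dist_eq, Real.norm_of_nonneg hc]
  have hK1 : (K 1).toGHSpace = p := by
    conv_rhs => rw [← p.toGHSpace_rep]
    refine toGHSpace_eq_toGHSpace_iff_isometryEquiv.2 ⟨IsometryEquiv.symm ?_⟩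
    refine IsometryEquiv.mk (Equiv.ofBijective (fun x => (⟨(1:ℝ) • Φ x, ⟨x, rfl⟩⟩ : K 1)) ⟨?_, ?_⟩) ?_
    · intro x y hxy
      have := congrArg Subtype.val hxy
      simp only [one_smul] at this
      exact hΦ.injective this
    · rintro ⟨_, x, rfl⟩; exact ⟨x, rfl⟩
    · refine Isometry.of_dist_eq fun x y => ?_
      simp [Subtype.dist_eq, hΦ.dist_eq]
  have hK0 : (K 0).toGHSpace = toGHSpace PUnit.{1} := by
    refine toGHSpace_eq_toGHSpace_iff_isometryEquiv.2 ⟨?_⟩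
    have hs : ∀ y : K 0, y.1 = 0 := by rintro ⟨_, x, rfl⟩; simp
    have hx : (0 : E) ∈ K 0 := ⟨Classical.arbitrary _, by simp⟩
    refine IsometryEquiv.mk ⟨fun _ => PUnit.unit, fun _ => ⟨0, hx⟩, fun y => Subtype.ext (hs y).symm,
      fun _ => rfl⟩ (Isometry.of_dist_eq fun x y => ?_)
    rw [Subtype.dist_eq, hs, hs]; simp
  obtain ⟨B, hB⟩ := (isCompact_range hΦ.continuous).isBounded.exists_norm_le
  have hcont : Continuous fun c => (K c).toGHSpace := by
    apply LipschitzWith.continuous (K := Real.toNNReal (max B 0))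
    refine LipschitzWith.of_dist_le_mul fun c c' => ?_
    refine (ghDist_le_nonemptyCompacts_dist _ _).trans ?_
    rw [Metric.NonemptyCompacts.dist_eq, Real.coe_toNNReal _ (le_max_right _ _)]
    have hb : ∀ c c' : ℝ, ∀ x, dist (c • Φ x) (c' • Φ x) ≤ max B 0 * dist c c' := by
      intro c c' x
      rw [dist_eq_norm, ← sub_smul, norm_smul, mul_comm, Real.dist_eq, Real.norm_eq_abs]
      gcongr
      exact (hB _ ⟨x, rfl⟩).trans (le_max_left _ _)
    apply Metric.hausdorffDist_le_of_mem_dist (by positivity)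
    · rintro _ ⟨x, rfl⟩
      exact ⟨_, ⟨x, rfl⟩, hb _ _ x⟩
    · rintro _ ⟨x, rfl⟩
      exact ⟨_, ⟨x, rfl⟩, by rw [dist_comm c c']; exact hb _ _ x⟩
  refine ⟨⟨⟨fun t => (K t).toGHSpace, hcont.comp continuous_subtype_val⟩, ?_, ?_⟩, ?_⟩
  · simpa using hK0
  · simpa using hK1
  · intro t; exact hKmem t t.2.1

lemma cat0_pathConnected : PathConnectedSpace ↥GHCat0 := by
  have hpt : toGHSpace PUnit.{1} ∈ GHCat0 := by
    apply toGHSpace_mem_GHCat0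
    apply isCAT0_of_good
    intro x y
    refine ⟨fun _ => PUnit.unit, rfl, rfl, ?_, ?_⟩
    · intros; simp
    · intros; simp
  rw [← isPathConnected_iff_pathConnectedSpace]
  exact ⟨_, hpt, fun {y} hy => scale_path y hy⟩

lemma prodL2_dist_sq {X H : Type*} [MetricSpace X] [MetricSpace H] (p q : WithLp 2 (X × H)) :
    dist p q ^ 2 = dist p.fst q.fst ^ 2 + dist p.snd q.snd ^ 2 := by
  rw [WithLp.prod_dist_eq_add (by norm_num)]
  simp only [ENNReal.toReal_ofNat, Real.rpow_ofNat]
  rw [← Real.sqrt_eq_rpow, Real.sq_sqrt (by positivity)]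

lemma inner_CN {H : Type*} [NormedAddCommGroup H] [InnerProductSpace ℝ H] (z a b : H) (t : ℝ) :
    dist z ((1 - t) • a + t • b) ^ 2 =
      (1 - t) * dist z a ^ 2 + t * dist z b ^ 2 - t * (1 - t) * dist a b ^ 2 := by
  have e1 : z - ((1 - t) • a + t • b) = (1 - t) • (z - a) + t • (z - b) := by
    module
  have e2 : a - b = (z - b) - (z - a) := by abel
  rw [dist_eq_norm, dist_eq_norm, dist_eq_norm, dist_eq_norm, e1, e2, norm_add_sq_real,
    norm_sub_sq_real (z - b) (z - a), norm_smul, norm_smul, inner_smul_left, inner_smul_right,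
    real_inner_comm (z - a) (z - b), mul_pow, mul_pow]
  simp only [Real.norm_eq_abs, sq_abs, conj_trivial]
  ring

lemma slab_isCAT0 {X H : Type*} [MetricSpace X] [NormedAddCommGroup H] [InnerProductSpace ℝ H]
    (hX : IsCAT0Space X) (C : Set H) (hC : Convex ℝ C) :
    IsCAT0Space {q : WithLp 2 (X × H) | q.snd ∈ C} := by
  apply isCAT0_of_good
  rintro ⟨p, hp⟩ ⟨q, hq⟩
  obtain ⟨γ, h0, h1, h2, h3⟩ := hX.good p.fst q.fst
  let c : ℝ → ℝ := fun t => max 0 (min 1 t)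
  have hc : ∀ t ∈ Set.Icc (0:ℝ) 1, c t = t := by
    intro t ht; simp only [c]; rw [min_eq_right ht.2, max_eq_right ht.1]
  have hc0 : ∀ t, 0 ≤ c t := fun t => le_max_left _ _
  have hc1 : ∀ t, c t ≤ 1 := fun t => max_le zero_le_one (min_le_left _ _)
  let η : ℝ → {q : WithLp 2 (X × H) | q.snd ∈ C} := fun t =>
    ⟨WithLp.toLp 2 (γ t, (1 - c t) • p.snd + c t • q.snd),
      hC hp hq (by linarith [hc1 t]) (hc0 t) (by ring)⟩
  have hfst : ∀ t, (η t).1.fst = γ t := fun t => rfl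
  have hsnd : ∀ t ∈ Set.Icc (0:ℝ) 1, (η t).1.snd = (1 - t) • p.snd + t • q.snd := by
    intro t ht
    have : (η t).1.snd = (1 - c t) • p.snd + c t • q.snd := rfl
    rw [this, hc t ht]
  have hz : (0:ℝ) ∈ Set.Icc (0:ℝ) 1 := ⟨le_rfl, zero_le_one⟩
  have ho : (1:ℝ) ∈ Set.Icc (0:ℝ) 1 := ⟨zero_le_one, le_rfl⟩
  refine ⟨η, ?_, ?_, ?_, ?_⟩
  · apply Subtype.ext
    simp [η, hc 0 hz, h0]
    rfl
  · apply Subtype.ext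
    simp [η, hc 1 ho, h1]
    rfl
  · intro s hs t ht
    have hd : dist (η s).1.snd (η t).1.snd = |s - t| * dist p.snd q.snd := by
      rw [hsnd s hs, hsnd t ht, dist_eq_norm, dist_eq_norm]
      have : (1 - s) • p.snd + s • q.snd - ((1 - t) • p.snd + t • q.snd) =
        (t - s) • (p.snd - q.snd) := by module
      rw [this, norm_smul, Real.norm_eq_abs, abs_sub_comm]
    rw [← sq_eq_sq₀ dist_nonneg (by positivity), mul_pow, Subtype.dist_eq, Subtype.dist_eq,
      prodL2_dist_sq, prodL2_dist_sq, hd, hfst, hfst, h2 s hs t ht]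
    ring
  · rintro ⟨z, hz⟩ t ht
    simp only [Subtype.dist_eq, prodL2_dist_sq, hfst]
    rw [hsnd t ht, inner_CN]
    have := h3 z.fst t ht
    linarith

lemma exists_cells {X : Type*} [MetricSpace X] {A : Set X} (hA : IsCompact A) {ρ : ℝ}
    (hρ : 0 < ρ) : ∃ (m : ℕ) (cell : A → Fin m), ∀ x y, cell x = cell y → dist x y ≤ ρ := by
  obtain ⟨t, _, htf, htc⟩ := hA.finite_cover_balls (half_pos hρ)
  have : ∀ x : A, ∃ c : t, dist x.1 c.1 < ρ / 2 := by
    intro x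
    obtain ⟨c, hc, hxc⟩ := Set.mem_iUnion₂.1 (htc x.2)
    exact ⟨⟨c, hc⟩, hxc⟩
  choose f hf using this
  haveI := htf.fintype
  refine ⟨Fintype.card t, fun x => Fintype.equivFin t (f x), fun x y hxy => ?_⟩
  have hxy' : f x = f y := (Fintype.equivFin t).injective hxy
  have h1 := hf x
  have h2 := hf y
  rw [hxy'] at h1
  rw [Subtype.dist_eq]
  linarith [dist_triangle_right x.1 y.1 (f y).1]

/-- Recursively chosen dimensions. -/
def dseq (m : ℕ → ℕ) (c : ℕ → ℕ → ℕ) : ℕ → ℕ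
  | k => m k * ∏ j : Fin k, c k (dseq m c j) + 1
termination_by k => k
decreasing_by exact j.2

lemma dseq_eq (m : ℕ → ℕ) (c : ℕ → ℕ → ℕ) (k : ℕ) :
    dseq m c k = m k * ∏ j : Fin k, c k (dseq m c j) + 1 := by
  rw [dseq]

/-- The Hilbert space used to thicken. -/
abbrev HSp (N : ℕ) (d : ℕ → ℕ) : Type := PiLp 2 (fun i : Fin N => EuclideanSpace ℝ (Fin (d i)))

/-- The polyball with radii `R i`. -/
def polyball {N : ℕ} {d : ℕ → ℕ} (R : Fin N → ℝ) : Set (HSp N d) := {v | ∀ i, ‖v i‖ ≤ R i}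

lemma polyball_convex {N : ℕ} {d : ℕ → ℕ} (R : Fin N → ℝ) :
    Convex ℝ (polyball R : Set (HSp N d)) := by
  intro v hv w hw a b ha hb hab i
  have h1 := hv i
  have h2 := hw i
  calc ‖(a • v + b • w) i‖ = ‖a • v i + b • w i‖ := by simp
    _ ≤ ‖a • v i‖ + ‖b • w i‖ := norm_add_le _ _
    _ = a * ‖v i‖ + b * ‖w i‖ := by
      rw [norm_smul, norm_smul, Real.norm_of_nonneg ha, Real.norm_of_nonneg hb]
    _ ≤ a * R i + b * R i := by gcongr
    _ = R i := by rw [← add_mul, hab, one_mul]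

lemma polyball_compact {N : ℕ} {d : ℕ → ℕ} (R : Fin N → ℝ) :
    IsCompact (polyball R : Set (HSp N d)) := by
  apply Metric.isCompact_of_isClosed_isBounded
  · have : (polyball R : Set (HSp N d)) = ⋂ i, {v | ‖v i‖ ≤ R i} := by
      ext; simp [polyball]
    rw [this]
    refine isClosed_iInter fun i => isClosed_le ?_ continuous_const
    fun_prop
  · rw [isBounded_iff_forall_norm_le]
    refine ⟨√(∑ i, R i ^ 2), fun v hv => ?_⟩
    apply Real.le_sqrt_of_sq_le
    rw [PiLp.norm_sq_eq_of_L2]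
    exact Finset.sum_le_sum fun i _ => by
      have := hv i
      gcongr

/-- Thickening of `X` by a polyball. -/
def thick (X : Type*) [MetricSpace X] [CompactSpace X] [Nonempty X] {N : ℕ} (d : ℕ → ℕ)
    (R : Fin N → ℝ) (hR : ∀ i, 0 ≤ R i) : TopologicalSpace.NonemptyCompacts (WithLp 2 (X × HSp N d)) :=
  ⟨⟨{q | q.snd ∈ (polyball R : Set (HSp N d))}, by
    have h := (isCompact_univ (X := X)).prod (polyball_compact (d := d) R)
    have h2 := h.image (WithLp.prod_continuous_toLp 2 X (HSp N d))
    convert h2 using 1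
    ext q
    constructor
    · intro hq; exact ⟨(q.fst, q.snd), ⟨trivial, hq⟩, rfl⟩
    · rintro ⟨y, ⟨_, hy⟩, rfl⟩; exact hy⟩,
    ⟨WithLp.toLp 2 (Classical.arbitrary X, 0), fun i => by simpa using hR i⟩⟩

lemma thick_mem {X : Type*} [MetricSpace X] [CompactSpace X] [Nonempty X] {N : ℕ} {d : ℕ → ℕ}
    {R : Fin N → ℝ} {hR : ∀ i, 0 ≤ R i} {q : WithLp 2 (X × HSp N d)} :
    q ∈ thick X d R hR ↔ ∀ i, ‖q.snd i‖ ≤ R i := Iff.rfl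

lemma thick_cat0 {X : Type*} [MetricSpace X] [CompactSpace X] [Nonempty X] (hX : IsCAT0Space X)
    {N : ℕ} {d : ℕ → ℕ} {R : Fin N → ℝ} {hR : ∀ i, 0 ≤ R i} :
    (thick X d R hR).toGHSpace ∈ GHCat0 :=
  toGHSpace_mem_GHCat0 (X := thick X d R hR) (slab_isCAT0 hX _ (polyball_convex R))

lemma thick_zero {X : Type*} [MetricSpace X] [CompactSpace X] [Nonempty X]
    {N : ℕ} {d : ℕ → ℕ} {R : Fin N → ℝ} {hR : ∀ i, 0 ≤ R i} (h0 : ∀ i, R i = 0) :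
    (thick X d R hR).toGHSpace = toGHSpace X := by
  refine toGHSpace_eq_toGHSpace_iff_isometryEquiv.2 ⟨IsometryEquiv.symm ?_⟩
  refine IsometryEquiv.mk (Equiv.ofBijective (fun x =>
    (⟨WithLp.toLp 2 (x, 0), fun i => by simpa using hR i⟩ : thick X d R hR)) ⟨?_, ?_⟩) ?_
  · intro x y hxy
    have := congrArg (fun q : thick X d R hR => q.1.fst) hxy
    exact this
  · rintro ⟨q, hq⟩
    refine ⟨q.fst, Subtype.ext ?_⟩
    have hs : q.snd = 0 := by
      ext1 i
      have h1 := thick_mem.1 hq i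
      rw [h0 i] at h1
      exact norm_le_zero_iff.1 h1
    show WithLp.toLp 2 (q.fst, 0) = q
    rw [← hs]
    rfl
  · refine Isometry.of_dist_eq fun x y => ?_
    rw [← sq_eq_sq₀ dist_nonneg dist_nonneg]
    show dist (WithLp.toLp 2 (x, (0 : HSp N d))) (WithLp.toLp 2 (y, (0 : HSp N d))) ^ 2 = _
    rw [prodL2_dist_sq]
    simp

lemma thick_dist_aux {X : Type*} [MetricSpace X] [CompactSpace X] [Nonempty X]
    {N : ℕ} {d : ℕ → ℕ} {R R' : Fin N → ℝ} {hR : ∀ i, 0 ≤ R i} (hR' : ∀ i, 0 ≤ R' i)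
    (q : WithLp 2 (X × HSp N d)) (hq : q ∈ thick X d R hR) :
    ∃ q' ∈ thick X d R' hR', dist q q' ^ 2 ≤ ∑ i, (R i - R' i) ^ 2 := by
  refine ⟨WithLp.toLp 2 (q.fst, WithLp.toLp 2 fun i => (R' i / R i) • q.snd i), ?_, ?_⟩
  · rw [thick_mem]
    intro i
    have h1 := thick_mem.1 hq i
    show ‖(R' i / R i) • q.snd i‖ ≤ R' i
    rw [norm_smul, Real.norm_of_nonneg (div_nonneg (hR' i) (hR i))]
    rcases (hR i).eq_or_lt with h0 | h0
    · rw [← h0]; simpa using hR' i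
    · calc R' i / R i * ‖q.snd i‖ ≤ R' i / R i * R i := by
            have := div_nonneg (hR' i) (hR i)
            gcongr
        _ = R' i := by field_simp
  · rw [prodL2_dist_sq]
    show dist q.fst q.fst ^ 2 + dist q.snd (WithLp.toLp 2 fun i => (R' i / R i) • q.snd i) ^ 2 ≤ _
    rw [dist_self, dist_eq_norm, PiLp.norm_sq_eq_of_L2]
    simp only [ne_eq, OfNat.ofNat_ne_zero, not_false_eq_true, zero_pow, zero_add]
    refine Finset.sum_le_sum fun i _ => ?_
    have h1 := thick_mem.1 hq i
    show ‖q.snd i - (R' i / R i) • q.snd i‖ ^ 2 ≤ _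
    rw [← sq_abs (R i - R' i)]
    gcongr
    rcases (hR i).eq_or_lt with h0 | h0
    · rw [← h0] at h1 ⊢
      rw [norm_le_zero_iff.1 h1]; simp
    · have e : q.snd i - (R' i / R i) • q.snd i = ((R i - R' i) / R i) • q.snd i := by
        rw [sub_div, div_self h0.ne', sub_smul, one_smul]
      rw [e, norm_smul, Real.norm_eq_abs, abs_div, abs_of_pos h0]
      calc |R i - R' i| / R i * ‖q.snd i‖ ≤ |R i - R' i| / R i * R i := by gcongr
        _ = _ := by field_simp

lemma thick_dist {X : Type*} [MetricSpace X] [CompactSpace X] [Nonempty X]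
    {N : ℕ} {d : ℕ → ℕ} {R R' : Fin N → ℝ} (hR : ∀ i, 0 ≤ R i) (hR' : ∀ i, 0 ≤ R' i)
    (D : ℝ) (hD : 0 ≤ D) (h : ∑ i, (R i - R' i) ^ 2 ≤ D ^ 2) :
    dist (thick X d R hR).toGHSpace (thick X d R' hR').toGHSpace ≤ D := by
  refine (ghDist_le_nonemptyCompacts_dist _ _).trans ?_
  rw [Metric.NonemptyCompacts.dist_eq]
  apply Metric.hausdorffDist_le_of_mem_dist hD
  · intro q hq
    obtain ⟨q', hq', hd⟩ := thick_dist_aux hR' q hq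
    exact ⟨q', hq', abs_le_of_sq_le_sq' (hd.trans h) hD |>.2⟩
  · intro q hq
    obtain ⟨q', hq', hd⟩ := thick_dist_aux hR q hq
    refine ⟨q', hq', abs_le_of_sq_le_sq' (hd.trans ?_) hD |>.2⟩
    refine le_trans (le_of_eq ?_) h
    exact Finset.sum_congr rfl fun i _ => by ring

set_option maxHeartbeats 2000000 in
lemma thick_ne (X : Type*) [MetricSpace X] [CompactSpace X] [Nonempty X] (N : ℕ) (ε : ℝ)
    (d : ℕ → ℕ) (r ρ : ℕ → ℝ) (hr : ∀ i, 0 < r i) (hρ : ∀ i, 0 < ρ i) (hρr : ∀ i, ρ i = r i / (N + 2))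
    (hrε' : ∀ i, r i ≤ ε) (hrρ : ∀ k j, k < j → 2 * r j ≤ ρ k)
    (k : Fin N) (m : ℕ) (cX : ↥(Set.univ : Set X) → Fin m)
    (hcX : ∀ x y, cX x = cX y → dist x y ≤ ρ k)
    (c : ℕ → ℕ) (cE : ∀ d : ℕ, Metric.closedBall (0 : EuclideanSpace ℝ (Fin d)) ε → Fin (c d))
    (hcE : ∀ d x y, cE d x = cE d y → dist x y ≤ ρ k)
    (hd : m * ∏ j : Fin k, c (d j) < d k)
    (R R' : Fin N → ℝ) (hR : ∀ i, 0 ≤ R i) (hR' : ∀ i, 0 ≤ R' i)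
    (hle : ∀ i : Fin N, R i ≤ r i) (hk0 : R k = 0) (hk1 : R' k = r k) :
    (thick X d R hR).toGHSpace ≠ (thick X d R' hR').toGHSpace := by
  intro heq
  obtain ⟨ψ⟩ := toGHSpace_eq_toGHSpace_iff_isometryEquiv.1 heq.symm
  -- the separated points
  let u : Fin (d k) → HSp N d := fun a =>
    WithLp.toLp 2 (Pi.single k (EuclideanSpace.single a (r k)))
  have huk : ∀ a, u a k = EuclideanSpace.single a (r k) := fun a => by simp [u]
  have huk' : ∀ a i, i ≠ k → u a i = 0 := fun a i hi => by simp [u, hi]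
  let P : Fin (d k) → thick X d R' hR' := fun a =>
    ⟨WithLp.toLp 2 (Classical.arbitrary X, u a), by
      rw [thick_mem]
      intro i
      show ‖u a i‖ ≤ R' i
      by_cases hi : i = k
      · subst hi
        rw [huk, hk1, EuclideanSpace.norm_single, Real.norm_of_nonneg (hr _).le]
      · rw [huk' a i hi]; simpa using hR' i⟩
  have hPd : ∀ a b, a ≠ b → r k ^ 2 ≤ dist (P a) (P b) ^ 2 := by
    intro a b hab
    rw [Subtype.dist_eq, prodL2_dist_sq]
    show r k ^ 2 ≤ dist (Classical.arbitrary X) (Classical.arbitrary X) ^ 2 + dist (u a) (u b) ^ 2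
    rw [dist_self, zero_pow two_ne_zero, zero_add]
    have hk := (hr k).le
    gcongr
    rw [dist_eq_norm]
    have h1 := PiLp.norm_apply_le (u a - u b) k
    have h2 := PiLp.norm_apply_le ((u a - u b) k) a
    refine le_trans ?_ (h2.trans h1)
    have h3 : (u a - u b) k = u a k - u b k := rfl
    rw [h3, huk, huk]
    simp [hab, abs_of_pos (hr k)]
  let Q : Fin (d k) → WithLp 2 (X × HSp N d) := fun a => (ψ (P a)).1
  have hQ : ∀ a i, ‖(Q a).snd i‖ ≤ R i := fun a => thick_mem.1 (ψ (P a)).2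
  have hQε : ∀ a (i : Fin N), (Q a).snd i ∈ Metric.closedBall (0 : EuclideanSpace ℝ (Fin (d i))) ε := by
    intro a i
    rw [mem_closedBall_zero_iff]
    exact (hQ a i).trans ((hle i).trans (hrε' _))
  let code : Fin (d k) → Fin m × ((j : Fin k) → Fin (c (d j))) := fun a =>
    (cX ⟨(Q a).fst, trivial⟩, fun j => cE _ ⟨(Q a).snd ⟨j, j.2.trans k.2⟩, hQε a ⟨j, j.2.trans k.2⟩⟩)
  obtain ⟨a, b, hab, hcode⟩ := Fintype.exists_ne_map_eq_of_card_lt code (by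
    rw [Fintype.card_prod, Fintype.card_pi]
    simp only [Fintype.card_fin]
    exact hd)
  have h1 : dist (Q a).fst (Q b).fst ≤ ρ k := hcX _ _ (congrArg Prod.fst hcode)
  have h2 : ∀ i, dist ((Q a).snd i) ((Q b).snd i) ≤ ρ k := by
    intro i
    rcases lt_trichotomy i k with hik | hik | hik
    · have hc2 := congrFun (congrArg Prod.snd hcode) ⟨i, hik⟩
      have hc3 : cE (d i) ⟨(Q a).snd i, hQε a i⟩ = cE (d i) ⟨(Q b).snd i, hQε b i⟩ := hc2
      have hc4 := hcE (d i) _ _ hc3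
      rw [Subtype.dist_eq] at hc4
      exact hc4
    · subst hik
      have e1 := hQ a i
      have e2 := hQ b i
      rw [hk0] at e1 e2
      rw [norm_le_zero_iff.1 e1, norm_le_zero_iff.1 e2, dist_self]
      exact (hρ i).le
    · refine le_trans ?_ (hrρ k i hik)
      have e1 := (hQ a i).trans (hle i)
      have e2 := (hQ b i).trans (hle i)
      rw [dist_eq_norm]
      have := norm_sub_le ((Q a).snd i) ((Q b).snd i)
      linarith
  have h3 : dist (P a) (P b) ^ 2 ≤ (N + 1) * ρ k ^ 2 := by
    rw [← ψ.isometry.dist_eq, Subtype.dist_eq]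
    show dist (Q a) (Q b) ^ 2 ≤ _
    rw [prodL2_dist_sq, dist_eq_norm (Q a).snd, PiLp.norm_sq_eq_of_L2]
    have h4 : ∑ i, ‖((Q a).snd - (Q b).snd) i‖ ^ 2 ≤ ∑ i : Fin N, ρ k ^ 2 := by
      refine Finset.sum_le_sum fun i _ => ?_
      have := h2 i
      rw [dist_eq_norm] at this
      have h5 : ((Q a).snd - (Q b).snd) i = (Q a).snd i - (Q b).snd i := rfl
      rw [h5]
      gcongr
    have h6 : dist (Q a).fst (Q b).fst ^ 2 ≤ ρ k ^ 2 := by gcongr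
    simp only [Finset.sum_const, Finset.card_univ, Fintype.card_fin, nsmul_eq_mul] at h4
    linarith
  have h4 := (hPd a b hab).trans h3
  have h5 : (N + 1) * ρ k ^ 2 = r k ^ 2 * ((N + 1) / (N + 2) ^ 2) := by
    rw [hρr]; field_simp
  rw [h5] at h4
  have h6 : ((N:ℝ) + 1) / (N + 2) ^ 2 < 1 := by
    rw [div_lt_one (by positivity)]
    nlinarith [show (0:ℝ) ≤ N from by positivity]
  have h7 : 0 < r k ^ 2 := pow_pos (hr k) 2
  nlinarith

lemma exists_family (X : Type*) [MetricSpace X] [CompactSpace X] [Nonempty X] (N : ℕ) (ε : ℝ)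
    (hε : 0 < ε) : ∃ (d : ℕ → ℕ) (r : Fin N → ℝ), (∀ i, 0 < r i) ∧
      (∑ i, r i ^ 2 ≤ (ε / 2) ^ 2) ∧
      ∀ (k : Fin N) (R R' : Fin N → ℝ) (hR : ∀ i, 0 ≤ R i) (hR' : ∀ i, 0 ≤ R' i),
        (∀ i, R i ≤ r i) → R k = 0 → R' k = r k →
        (thick X d R hR).toGHSpace ≠ (thick X d R' hR').toGHSpace := by
  let q : ℝ := 1 / (2 * (N + 2))
  have hq0 : 0 < q := by positivity
  have hq1 : q ≤ 1 := by
    simp only [q]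
    rw [div_le_one (by positivity)]
    linarith [show (0:ℝ) ≤ N from by positivity]
  let r : ℕ → ℝ := fun i => ε * q ^ (i + 1)
  have hr : ∀ i, 0 < r i := fun i => by positivity
  let ρ : ℕ → ℝ := fun k => r k / (N + 2)
  have hρ : ∀ k, 0 < ρ k := fun k => div_pos (hr k) (by positivity)
  have hrε : ∀ i, r i ≤ ε * q := by
    intro i
    simp only [r]
    gcongr
    calc q ^ (i + 1) = q ^ i * q := pow_succ _ _
      _ ≤ 1 * q := by gcongr; exact pow_le_one₀ hq0.le hq1
      _ = q := one_mul _
  have hrε' : ∀ i, r i ≤ ε := fun i => (hrε i).trans (by nlinarith)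
  have hrρ : ∀ k j, k < j → 2 * r j ≤ ρ k := by
    intro k j hkj
    have h1 : q ^ (j + 1) ≤ q ^ (k + 1) * q := by
      rw [← pow_succ]
      exact pow_le_pow_of_le_one hq0.le hq1 (by omega)
    calc 2 * r j ≤ 2 * (ε * (q ^ (k + 1) * q)) := by simp only [r]; gcongr
      _ = r k * (2 * q) := by simp only [r]; ring
      _ = ρ k := by simp only [q, ρ]; field_simp
  choose m cX hcX using fun k => exists_cells (isCompact_univ (X := X)) (hρ k)
  choose c cE hcE using fun k d => exists_cells
    (isCompact_closedBall (0 : EuclideanSpace ℝ (Fin d)) ε) (hρ k)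
  refine ⟨dseq m c, fun i => r i, fun i => hr i, ?_, ?_⟩
  · calc ∑ i : Fin N, r i ^ 2 ≤ ∑ i : Fin N, (ε * q) ^ 2 := by
          refine Finset.sum_le_sum fun i _ => ?_
          have := hrε i
          have := (hr i).le
          gcongr
      _ = N * (ε * q) ^ 2 := by simp
      _ = (ε / 2) ^ 2 * (N / (N + 2) ^ 2) := by simp only [q]; field_simp
      _ ≤ (ε / 2) ^ 2 * 1 := by
          gcongr
          rw [div_le_one (by positivity)]
          nlinarith [show (0:ℝ) ≤ N from by positivity]
      _ = _ := mul_one _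
  · intro k R R' hR hR' hle hk0 hk1
    exact thick_ne X N ε (dseq m c) r ρ hr hρ (fun _ => rfl) hrε' hrρ k (m k) (cX k) (hcX k) (c k)
      (cE k) (hcE k) (by conv_rhs => rw [dseq_eq]
                         exact Nat.lt_succ_self _) R R' hR hR' hle hk0 hk1

lemma cat0_infinite_dim (U : Set ↥GHCat0) (hU : IsOpen U) (hne : U.Nonempty) (n : ℕ) :
    ¬ CovDimLE ↥U n := by
  obtain ⟨p, hp⟩ := hne
  obtain ⟨ε, hε, hball⟩ := Metric.isOpen_iff.1 hU p hp
  have hX : IsCAT0Space p.1.Rep := p.2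
  obtain ⟨d, r, hr, hsum, hsep⟩ := exists_family p.1.Rep (n + 1) ε hε
  have hc0 : ∀ (x : Fin (n + 1) → ℝ) i, 0 ≤ cclamp x i := fun x i => (cclamp_mem x).1 i
  have hc1 : ∀ (x : Fin (n + 1) → ℝ) i, cclamp x i ≤ 1 := fun x i => (cclamp_mem x).2 i
  have hpos : ∀ (x : Fin (n + 1) → ℝ) i, 0 ≤ cclamp x i * r i := fun x i =>
    mul_nonneg (hc0 x i) (hr i).le
  have hidem : ∀ x : Fin (n + 1) → ℝ, cclamp (cclamp x) = cclamp x := by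
    intro x; funext i
    have h0 := hc0 x i
    have h1 := hc1 x i
    rw [cclamp, min_eq_right h1, max_eq_right h0]
  let Y : (Fin (n + 1) → ℝ) → GHSpace := fun x =>
    (thick p.1.Rep d (fun i => cclamp x i * r i) (hpos x)).toGHSpace
  have hY : ∀ x, Y x ∈ GHCat0 := fun x => thick_cat0 hX
  have hYd : ∀ x y, dist (Y x) (Y y) ≤ ε / 2 * dist (cclamp x) (cclamp y) := by
    intro x y
    apply thick_dist _ _ _ (by positivity)
    calc ∑ i, (cclamp x i * r i - cclamp y i * r i) ^ 2
        ≤ ∑ i, r i ^ 2 * dist (cclamp x) (cclamp y) ^ 2 := by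
          refine Finset.sum_le_sum fun i _ => ?_
          rw [← sub_mul, mul_pow, mul_comm, ← sq_abs (cclamp x i - cclamp y i)]
          have := dist_le_pi_dist (cclamp x) (cclamp y) i
          rw [Real.dist_eq] at this
          gcongr
      _ = (∑ i, r i ^ 2) * dist (cclamp x) (cclamp y) ^ 2 := by rw [Finset.sum_mul]
      _ ≤ (ε / 2) ^ 2 * dist (cclamp x) (cclamp y) ^ 2 := by gcongr
      _ = _ := by ring
  have hY0 : Y 0 = p.1 := by
    rw [← p.1.toGHSpace_rep]
    apply thick_zero
    intro i; simp [cclamp]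
  have hYcont : Continuous Y := by
    apply LipschitzWith.continuous (K := Real.toNNReal (ε / 2))
    refine LipschitzWith.of_dist_le_mul fun x y => ?_
    rw [Real.coe_toNNReal _ (by positivity)]
    refine (hYd x y).trans ?_
    have := cclamp_lip.dist_le_mul x y
    rw [NNReal.coe_one, one_mul] at this
    gcongr
  have hYU : ∀ x, (⟨Y x, hY x⟩ : ↥GHCat0) ∈ U := by
    intro x
    apply hball
    rw [Metric.mem_ball, Subtype.dist_eq]
    show dist (Y x) p.1 < ε
    rw [← hY0]
    refine lt_of_le_of_lt (hYd x 0) ?_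
    have h1 : dist (cclamp x) (cclamp 0) ≤ 1 := by
      rw [dist_pi_le_iff zero_le_one]
      intro i
      rw [Real.dist_eq, abs_le]
      have := hc0 x i; have := hc1 x i; have := hc0 0 i; have := hc1 0 i
      constructor <;> linarith
    nlinarith
  refine not_covDimLE_s7 n (fun x => (⟨⟨Y x, hY x⟩, hYU x⟩ : ↥U)) ?_ ?_ ?_
  · exact (hYcont.subtype_mk _).subtype_mk _
  · intro x
    apply Subtype.ext
    apply Subtype.ext
    show Y (cclamp x) = Y x
    simp only [Y, hidem]
  · intro k x y hx hy he
    have he' : Y x = Y y := congrArg (fun q : ↥U => q.1.1) he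
    refine hsep k _ _ (hpos x) (hpos y) ?_ ?_ ?_ he'
    · intro i
      have := hc1 x i
      have := (hr i).le
      nlinarith
    · simp [cclamp, hx]
    · simp [cclamp, hy]

/-- The set `𝒵` of all compact CAT(0) metric spaces is
path-connected as a subspace of the Gromov–Hausdorff space, and every nonempty
open subset of `𝒵` has infinite covering dimension. -/
theorem statement7 :
    PathConnectedSpace ↥GHCat0 ∧
    ∀ U : Set ↥GHCat0, IsOpen U → U.Nonempty →
      ¬ ∃ n : ℕ, CovDimLE ↥U n := by
  refine ⟨cat0_pathConnected, ?_⟩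
  rintro U hU hne ⟨n, hn⟩
  exact cat0_infinite_dim U hU hne n hn
end
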